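/- arXiv:1907.02308 — 8 statements merged into one kernel-verified Lean document; each statement's English description precedes it below -/
import Mathlib

section
/- Let w be a primitive word of length n over a linearly ordered alphabet, let M_alt(w) be the matrix of its ≼_alt-sorted cyclic rotations and L = abwt(w) its last column. If 0 ≤ i < j < n and L[i] = L[j], then LF(j) < LF(i); that is, equal symbols occur in the last column L in the reverse of the relative order in which their corresponding occurrences appear in the first column F. -/
namespace Paper

variable {α : Type*}

/-- Extended alternating lexicographic strict order; the flag `b` is `true`
when the current position index is even. -/
def altLtAux [LinearOrder α] : Bool → List α → List α → Prop
  | _, [], [] => False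
  | b, [], _ :: _ => b = true
  | b, _ :: _, [] => b = false
  | b, c :: x, d :: y => (if b then c < d else d < c) ∨ (c = d ∧ altLtAux (!b) x y)

/-- The alternating lexicographic strict order (positions indexed from 0). -/
def AltLt [LinearOrder α] (x y : List α) : Prop := altLtAux true x y

/-- The reflexive alternating lexicographic order. -/
def AltLe [LinearOrder α] (x y : List α) : Prop := x = y ∨ AltLt x y

/-- A word is primitive if its cyclic rotations are pairwise distinct. -/
def Primitive (w : List α) : Prop :=
  ∀ i j, i < w.length → j < w.length → w.rotate i = w.rotate j → i = j
theorem altLtAux_irrefl [LinearOrder α] (x : List α) : ∀ b, ¬ altLtAux b x x := by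
  induction x with
  | nil => intro b h; simp [altLtAux] at h
  | cons a x ih =>
    intro b h
    rcases h with h | ⟨_, h⟩
    · cases b <;> simp at h
    · exact ih _ h

theorem altLtAux_append_asymm [LinearOrder α] (c : α) (x : List α) :
    ∀ (y : List α) (b : Bool), x.length = y.length →
      altLtAux b (x ++ [c]) (y ++ [c]) → ¬ altLtAux (!b) x y := by
  induction x with
  | nil =>
    intro y b hl _ h
    cases y with
    | nil => simp [altLtAux] at h
    | cons d y => simp at hl
  | cons a x ih =>
    intro y b hl h1 h2
    cases y with
    | nil => simp at hl
    | cons d y =>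
      simp only [List.cons_append] at h1
      rcases h1 with h1 | ⟨e, h1⟩ <;> rcases h2 with h2 | ⟨e2, h2⟩
      · cases b
        · exact lt_asymm (by simpa using h1) (by simpa using h2)
        · exact lt_asymm (by simpa using h1) (by simpa using h2)
      · subst e2; cases b <;> simp at h1
      · subst e; cases b <;> simp at h2
      · exact ih y (!b) (by simpa using hl) h1 h2

theorem rotate_append_last (x : List α) (c : α) :
    (x ++ [c]).rotate ((x ++ [c]).length - 1) = c :: x := by
  simp [List.rotate_append_length_eq]

/-- in the ≼_alt-sorted rotation matrix of a primitive word,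
equal symbols of the last column `L` are mapped by `LF` in reverse order:
if `i < j` and `L i = L j` then `LF j < LF i`. -/
theorem abwt_LF_reverses_equal_symbols [LinearOrder α] (n : ℕ) (w : List α)
    (hw : w.length = n) (hprim : Primitive w)
    (rows : Fin n → List α) (L : Fin n → α) (LF : Fin n → Fin n)
    (hrows : ∀ j : Fin n, ∃ i : Fin n, rows i = w.rotate j.val)
    (hsorted : ∀ i j : Fin n, i < j → AltLt (rows i) (rows j))
    (hL : ∀ i, (rows i).getLast? = some (L i))
    (hLF : ∀ i, rows (LF i) = (rows i).rotate ((rows i).length - 1)) :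
    ∀ i j : Fin n, i < j → L i = L j → LF j < LF i := by
  intro i j hij hLij
  choose f hf using hrows
  have hinj : Function.Injective f := by
    intro a b hab
    apply Fin.ext
    apply hprim _ _ (by rw [hw]; exact a.2) (by rw [hw]; exact b.2)
    rw [← hf a, ← hf b, hab]
  have hsurj := Finite.surjective_of_injective hinj
  have hlen : ∀ i, (rows i).length = n := by
    intro i
    obtain ⟨a, rfl⟩ := hsurj i
    rw [hf a, List.length_rotate, hw]
  obtain ⟨x, hx⟩ := List.getLast?_eq_some_iff.1 (hL i)
  obtain ⟨y, hy⟩ := List.getLast?_eq_some_iff.1 (hL j)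
  rw [← hLij] at hy
  have hxy : x.length = y.length := by
    have h1 := hlen i
    have h2 := hlen j
    rw [hx] at h1
    rw [hy] at h2
    simp at h1 h2
    omega
  have hlt := hsorted i j hij
  have hi := hLF i
  have hj := hLF j
  rw [hx, rotate_append_last] at hi
  rw [hy, rotate_append_last] at hj
  rw [hx, hy] at hlt
  by_contra hcon
  rcases lt_or_eq_of_le (not_lt.1 hcon) with h | h
  · have h' := hsorted _ _ h
    rw [hi, hj] at h'
    rcases h' with h' | ⟨_, h'⟩
    · simp at h'
    · exact altLtAux_append_asymm _ x y true hxy hlt h'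
  · rw [h, hj] at hi
    have : y = x := by simpa using hi
    subst this
    exact altLtAux_irrefl _ _ hlt

end Paper
end

section
/- For every tuple K = (π_0, π_1, …, π_{k−1}) of linear orders on a finite alphabet Σ with π_0 the standard order, and for every n, the transformation BWT_K is invertible: the map sending a primitive word w of length n to the pair (bwt_K(w), I), where I is the row index of w in the ≼_K-sorted rotation matrix, is injective on primitive words of length n. -/
namespace Paper

variable {α : Type*}

/-- Generalized lexicographic strict order on equal-length words determined by a
sequence `σ` of strict orders, one per position (`σ d` is used at position `d`). -/
def KLt (σ : ℕ → α → α → Prop) : ℕ → List α → List α → Prop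
  | _, [], _ => False
  | _, _ :: _, [] => False
  | d, a :: x, b :: y => σ d a b ∨ (a = b ∧ KLt σ (d + 1) x y)
theorem KLt_asymm (σ : ℕ → α → α → Prop) (hσ : ∀ d, IsStrictTotalOrder α (σ d)) :
    ∀ (x y : List α) (d : ℕ), KLt σ d x y → KLt σ d y x → False := by
  intro x
  induction x with
  | nil => intro y d h; simp [KLt] at h
  | cons a x ih =>
    intro y d h h'
    cases y with
    | nil => simp [KLt] at h
    | cons b y =>
      have := hσ d
      simp only [KLt] at h h'
      rcases h with h | ⟨rfl, h⟩
      · rcases h' with h' | ⟨rfl, h'⟩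
        · exact irrefl_of (σ d) a (trans_of (σ d) h h')
        · exact irrefl_of (σ d) _ h
      · rcases h' with h' | ⟨_, h'⟩
        · exact irrefl_of (σ d) _ h'
        · exact ih y (d + 1) h h'

theorem KLt_take (σ : ℕ → α → α → Prop) :
    ∀ (m : ℕ) (x y : List α) (d : ℕ), KLt σ d x y →
      x.take m = y.take m ∨ KLt σ d (x.take m) (y.take m) := by
  intro m
  induction m with
  | zero => intro x y d _; left; simp
  | succ m ih =>
    intro x y d h
    cases x with
    | nil => simp [KLt] at h
    | cons a x =>
      cases y with
      | nil => simp [KLt] at h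
      | cons b y =>
        simp only [KLt, List.take_succ_cons] at h ⊢
        rcases h with h | ⟨rfl, h⟩
        · exact Or.inr (Or.inl h)
        · rcases ih x y (d + 1) h with h | h
          · left; rw [h]
          · exact Or.inr (Or.inr ⟨rfl, h⟩)

/-- The rows are permuted by the right rotation, which moves the last column in front. -/
theorem rows_perm (σ : ℕ → α → α → Prop) (hσ : ∀ d, IsStrictTotalOrder α (σ d))
    (n : ℕ) (w : List α) (hw : w.length = n) (hp : Primitive w)
    (rows : Fin n → List α) (L : Fin n → α)
    (hr : ∀ j : Fin n, ∃ i : Fin n, rows i = w.rotate j.val)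
    (hs : ∀ i j : Fin n, i < j → KLt σ 0 (rows i) (rows j))
    (hL : ∀ i, (rows i).getLast? = some (L i)) :
    (∀ i, (rows i).length = n) ∧ ∃ g : Equiv.Perm (Fin n), ∀ i (m : ℕ), m < n →
      (rows (g i)).take (m + 1) = L i :: (rows i).take m := by
  have hinj : Function.Injective rows := by
    intro i j hij
    rcases lt_trichotomy i j with h | h | h
    · have := hs i j h
      rw [hij] at this
      exact (KLt_asymm σ hσ _ _ _ this this).elim
    · exact h
    · have := hs j i h
      rw [hij] at this
      exact (KLt_asymm σ hσ _ _ _ this this).elim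
  choose f hf using hr
  have finj : Function.Injective f := by
    intro i j hij
    have h1 := hf i
    rw [hij, hf j] at h1
    exact Fin.ext (hp _ _ (by omega) (by omega) h1.symm)
  have fsurj : Function.Surjective f := Finite.surjective_of_injective finj
  have hlen : ∀ i, (rows i).length = n := by
    intro i
    obtain ⟨j, rfl⟩ := fsurj i
    rw [hf, List.length_rotate, hw]
  refine ⟨hlen, ?_⟩
  have hg : ∀ i, ∃ i', rows i' = (rows i).rotate (n - 1) := by
    intro i
    obtain ⟨j, rfl⟩ := fsurj i
    have hn : 0 < n := by have := j.2; omega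
    refine ⟨f ⟨(j.val + (n - 1)) % n, Nat.mod_lt _ hn⟩, ?_⟩
    rw [hf, hf, List.rotate_rotate]
    simp only
    have h2 := List.rotate_mod w (j.val + (n - 1))
    rw [hw] at h2
    exact h2
  choose g hg using hg
  have ginj : Function.Injective g := by
    intro i j hij
    have h1 := hg i
    rw [hij, hg j] at h1
    exact hinj (List.rotate_injective _ h1).symm
  refine ⟨Equiv.ofBijective g (Finite.injective_iff_bijective.mp ginj), ?_⟩
  intro i m hm
  rw [Equiv.ofBijective_apply, hg]
  obtain ⟨ys, hys⟩ := List.getLast?_eq_some_iff.mp (hL i)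
  have hl := hlen i
  rw [hys] at hl ⊢
  simp only [List.length_append, List.length_cons, List.length_nil] at hl
  have : n - 1 = ys.length := by omega
  rw [this, List.rotate_append_length_eq]
  rw [List.take_append_of_le_length (l₁ := ys) (by omega)]
  simp

/-- for every tuple `K = (π 0, …, π (k-1))` of linear orders with
`π 0` the standard order, the transformation `BWT_K` is invertible: the map
sending a primitive word `w` of length `n` to the pair `(bwt_K w, I)` (last
column of the ≼_K-sorted rotation matrix together with the row index of `w`)
is injective on primitive words of length `n`. -/
theorem bwtK_invertible [LinearOrder α] (k : ℕ) (hk : 0 < k)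
    (π : Fin k → α → α → Prop)
    (horder : ∀ t, IsStrictTotalOrder α (π t))
    (h0 : π ⟨0, hk⟩ = fun a b : α => a < b)
    (n : ℕ) (w₁ w₂ : List α) (hw₁ : w₁.length = n) (hw₂ : w₂.length = n)
    (hp₁ : Primitive w₁) (hp₂ : Primitive w₂)
    (rows₁ rows₂ : Fin n → List α) (L₁ L₂ : Fin n → α) (I₁ I₂ : Fin n)
    (hr₁ : ∀ j : Fin n, ∃ i : Fin n, rows₁ i = w₁.rotate j.val)
    (hr₂ : ∀ j : Fin n, ∃ i : Fin n, rows₂ i = w₂.rotate j.val)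
    (hs₁ : ∀ i j : Fin n, i < j →
      KLt (fun d => π ⟨d % k, Nat.mod_lt d hk⟩) 0 (rows₁ i) (rows₁ j))
    (hs₂ : ∀ i j : Fin n, i < j →
      KLt (fun d => π ⟨d % k, Nat.mod_lt d hk⟩) 0 (rows₂ i) (rows₂ j))
    (hL₁ : ∀ i, (rows₁ i).getLast? = some (L₁ i))
    (hL₂ : ∀ i, (rows₂ i).getLast? = some (L₂ i))
    (hI₁ : rows₁ I₁ = w₁) (hI₂ : rows₂ I₂ = w₂)
    (hL : L₁ = L₂) (hI : I₁ = I₂) :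
    w₁ = w₂ := by
  subst hL hI
  have hσ : ∀ d, IsStrictTotalOrder α ((fun d => π ⟨d % k, Nat.mod_lt d hk⟩) d) :=
    fun d => horder _
  generalize (fun d => π ⟨d % k, Nat.mod_lt d hk⟩) = σ at hs₁ hs₂ hσ
  obtain ⟨hl₁, g₁, hg₁⟩ := rows_perm σ hσ n w₁ hw₁ hp₁ rows₁ L₁ hr₁ hs₁ hL₁
  obtain ⟨hl₂, g₂, hg₂⟩ := rows_perm σ hσ n w₂ hw₂ hp₂ rows₂ L₁ hr₂ hs₂ hL₂
  have key : ∀ m, m ≤ n → ∀ i, (rows₁ i).take m = (rows₂ i).take m := by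
    intro m
    induction m with
    | zero => intro _ i; simp
    | succ m ih =>
      intro hm
      have ih := ih (by omega)
      have e : (fun i => (rows₁ i).take (m + 1)) ∘ g₁ =
          (fun i => (rows₂ i).take (m + 1)) ∘ g₂ := by
        funext i
        simp only [Function.comp]
        rw [hg₁ i m hm, hg₂ i m hm, ih]
      have p₁ := Equiv.Perm.ofFn_comp_perm g₁ (fun i => (rows₁ i).take (m + 1))
      have p₂ := Equiv.Perm.ofFn_comp_perm g₂ (fun i => (rows₂ i).take (m + 1))
      rw [e] at p₁
      have p := p₁.symm.trans p₂
      have q : List.ofFn (fun i => (rows₁ i).take (m + 1)) =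
          List.ofFn (fun i => (rows₂ i).take (m + 1)) := by
        refine List.Perm.eq_of_pairwise (le := fun x y => x = y ∨ KLt σ 0 x y) ?_ ?_ ?_ p
        · intro a b _ _ h h'
          rcases h with h | h
          · exact h
          · rcases h' with h' | h'
            · exact h'.symm
            · exact (KLt_asymm σ hσ _ _ _ h h').elim
        · exact List.pairwise_ofFn.mpr fun i j h => KLt_take σ _ _ _ _ (hs₁ i j h)
        · exact List.pairwise_ofFn.mpr fun i j h => KLt_take σ _ _ _ _ (hs₂ i j h)
      exact fun i => congrFun (List.ofFn_injective q) i
  have h := key n le_rfl I₁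
  rw [hI₁, hI₂, List.take_of_length_le hw₁.le, List.take_of_length_le hw₂.le] at h
  exact h

end Paper
end

section
/- Let w be a primitive word of length n over a linearly ordered alphabet Σ and L = abwt(w). Let p be a word with |p| < n such that the set of row indices of M_alt(w) whose rows have p as a prefix is a nonempty interval [b,e]. For a symbol x ∈ Σ, let C be the number of positions t with L[t] ≤ x in the standard order, and set b' = C − rank_x(L, e) and e' = C − rank_x(L, b−1) − 1. Then the set of row indices of M_alt(w) whose rows have xp as a prefix is exactly the interval [b', e']; in particular, if b' > e' then xp is not a circular factor of w, and if b' ≤ e' then [b', e'] is precisely the range of rows of M_alt(w) prefixed by xp. -/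
namespace Paper

variable {α : Type*}

theorem altLtAux_asymm [LinearOrder α] : ∀ (x y : List α) (b : Bool),
    altLtAux b x y → ¬ altLtAux b y x
  | [], [], b => by simp [altLtAux]
  | [], d :: y, b => by cases b <;> simp [altLtAux]
  | c :: x, [], b => by cases b <;> simp [altLtAux]
  | c :: x, d :: y, b => by
      have ih := altLtAux_asymm x y (!b)
      unfold altLtAux
      rintro (h | ⟨rfl, h⟩) (h' | ⟨h1, h'⟩)
      · cases b <;> simp at h h' <;> exact lt_asymm h h'
      · subst h1; cases b <;> simp at h
      · cases b <;> simp at h'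
      · exact ih h h'

theorem altLtAux_flip [LinearOrder α] : ∀ (x y : List α) (b : Bool), x.length = y.length →
    altLtAux b x y → altLtAux (!b) y x
  | [], [], b => by simp [altLtAux]
  | [], d :: y, b => by simp
  | c :: x, [], b => by simp
  | c :: x, d :: y, b => by
      intro hl
      have ih := altLtAux_flip x y (!b) (by simpa using hl)
      unfold altLtAux
      rintro (h | ⟨rfl, h⟩)
      · left; cases b <;> simpa using h
      · right; exact ⟨rfl, ih h⟩

theorem altLtAux_append [LinearOrder α] (a : α) : ∀ (x y : List α) (b : Bool),
    x.length = y.length → altLtAux b (x ++ [a]) (y ++ [a]) → altLtAux b x y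
  | [], [], b => by cases b <;> simp [altLtAux]
  | [], d :: y, b => by simp
  | c :: x, [], b => by simp
  | c :: x, d :: y, b => by
      intro hl
      have ih := altLtAux_append a x y (!b) (by simpa using hl)
      simp only [List.cons_append]
      unfold altLtAux
      rintro (h | ⟨rfl, h⟩)
      · left; exact h
      · right; exact ⟨rfl, ih h⟩

/-- The counting core of the argument. -/
theorem count_core [LinearOrder α] (n : ℕ) (L : Fin n → α) (f : Fin n → Fin n)
    (hf : Function.Bijective f)
    (hlt : ∀ s t, (L s < L t ∨ (L s = L t ∧ t < s)) → f s < f t) (t : Fin n) :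
    (f t : ℕ) + (Finset.univ.filter fun s : Fin n => s ≤ t ∧ L s = L t).card
      = (Finset.univ.filter fun s : Fin n => L s ≤ L t).card := by
  have hiff : ∀ s, f s < f t ↔ (L s < L t ∨ (L s = L t ∧ t < s)) := by
    intro s
    refine ⟨fun h => ?_, hlt s t⟩
    by_contra hc
    rcases lt_trichotomy (L s) (L t) with h1 | h1 | h1
    · exact hc (Or.inl h1)
    · rcases lt_trichotomy s t with h2 | h2 | h2
      · exact lt_asymm h (hlt t s (Or.inr ⟨h1.symm, h2⟩))
      · subst h2; exact lt_irrefl _ h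
      · exact hc (Or.inr ⟨h1, h2⟩)
    · exact lt_asymm h (hlt t s (Or.inl h1))
  have h1 : (f t : ℕ) = (Finset.univ.filter fun s : Fin n => f s < f t).card := by
    rw [← Fin.card_Iio (f t)]
    symm
    apply Finset.card_bij (fun s _ => f s)
    · intro s hs; simpa using hs
    · intro s _ s' _ h; exact hf.1 h
    · intro j hj
      obtain ⟨s, rfl⟩ := hf.2 j
      exact ⟨s, by simpa using hj, rfl⟩
  rw [h1, ← Finset.card_union_of_disjoint]
  · congr 1
    ext s
    simp only [Finset.mem_union, Finset.mem_filter, Finset.mem_univ, true_and, hiff]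
    constructor
    · rintro ((h | h) | h)
      · exact h.le
      · exact h.1.le
      · exact h.2.le
    · intro h
      rcases h.lt_or_eq with h | h
      · exact Or.inl (Or.inl h)
      · rcases le_or_gt s t with h2 | h2
        · exact Or.inr ⟨h2, h⟩
        · exact Or.inl (Or.inr ⟨h, h2⟩)
  · rw [Finset.disjoint_left]
    intro s
    simp only [Finset.mem_filter, Finset.mem_univ, true_and, hiff]
    rintro (h | h) h'
    · exact h.ne h'.2
    · exact absurd h'.1 (not_le.mpr h.2)

/-- backward search for the ABWT: if the rows of the ≼_alt-sorted
rotation matrix prefixed by `p` form the nonempty interval `[b,e]`, then for a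
symbol `x`, setting `C` = number of positions `t` with `L t ≤ x`,
`b' = C − rank_x(L,e)` and `e' = C − rank_x(L,b−1) − 1`, the rows prefixed by
`x :: p` are exactly those with index in `[b',e']` (an empty set when
`b' > e'`, in which case `x :: p` is not a circular factor of `w`). -/
theorem abwt_backward_search [LinearOrder α] (n : ℕ) (w : List α)
    (hw : w.length = n) (hprim : Primitive w)
    (rows : Fin n → List α) (L : Fin n → α)
    (hrows : ∀ j : Fin n, ∃ i : Fin n, rows i = w.rotate j.val)
    (hsorted : ∀ i j : Fin n, i < j → AltLt (rows i) (rows j))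
    (hL : ∀ i, (rows i).getLast? = some (L i))
    (p : List α) (hp : p.length < n) (b e : Fin n) (hble : b ≤ e)
    (hbe : ∀ i : Fin n, p <+: rows i ↔ (b ≤ i ∧ i ≤ e))
    (x : α) :
    ∀ i : Fin n, (x :: p) <+: rows i ↔
      (((Finset.univ.filter fun t : Fin n => L t ≤ x).card : ℤ)
          - ((Finset.univ.filter fun t : Fin n => t ≤ e ∧ L t = x).card : ℤ)
        ≤ (i : ℤ)
      ∧ (i : ℤ) ≤
        ((Finset.univ.filter fun t : Fin n => L t ≤ x).card : ℤ)
          - ((Finset.univ.filter fun t : Fin n => t < b ∧ L t = x).card : ℤ) - 1) := by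
  have hinj : Function.Injective rows := by
    intro i j hij
    rcases lt_trichotomy i j with h | h | h
    · have := hsorted i j h
      rw [hij] at this
      exact absurd this (altLtAux_asymm _ _ _ this)
    · exact h
    · have := hsorted j i h
      rw [hij] at this
      exact absurd this (altLtAux_asymm _ _ _ this)
  choose g hg using hrows
  have hginj : Function.Injective g := by
    intro j k hjk
    apply Fin.ext
    apply hprim j k (hw ▸ j.2) (hw ▸ k.2)
    rw [← hg, ← hg, hjk]
  have hgsurj : Function.Surjective g := Finite.surjective_of_injective hginj
  have hlen : ∀ i, (rows i).length = n := by
    intro i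
    obtain ⟨j, rfl⟩ := hgsurj i
    rw [hg, List.length_rotate, hw]
  have hdec : ∀ i, ∃ u : List α, rows i = u ++ [L i] := by
    intro i
    exact List.getLast?_eq_some_iff.mp (hL i)
  choose u hu using hdec
  have hulen : ∀ i, (u i).length + 1 = n := by
    intro i
    have := hlen i
    rw [hu] at this
    simpa using this
  have hex : ∀ t, ∃ i, rows i = L t :: u t := by
    intro t
    obtain ⟨j, hj⟩ := hgsurj t
    have hn : 0 < n := lt_of_le_of_lt (Nat.zero_le _) t.2
    refine ⟨g ⟨(j + (u t).length) % n, Nat.mod_lt _ hn⟩, ?_⟩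
    rw [hg]
    simp only
    have h1 : w.rotate ((j + (u t).length) % n) = w.rotate (j + (u t).length) := by
      have h2 := List.rotate_mod w (j + (u t).length)
      rwa [hw] at h2
    rw [h1, ← List.rotate_rotate, ← hg, hj, hu, List.rotate_append_length_eq]
    rfl
  choose f hf using hex
  have hfinj : Function.Injective f := by
    intro s t hst
    have h1 := hf s
    rw [hst, hf t] at h1
    have h2 := List.cons.inj h1
    apply hinj
    rw [hu s, hu t, h2.1, h2.2]
  have hfb : Function.Bijective f := ⟨hfinj, Finite.surjective_of_injective hfinj⟩
  have hlt : ∀ s t, (L s < L t ∨ (L s = L t ∧ t < s)) → f s < f t := by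
    intro s t h
    have key : AltLt (rows (f s)) (rows (f t)) := by
      rw [hf, hf]
      unfold AltLt altLtAux
      rcases h with h | ⟨h, hts⟩
      · left; simpa using h
      · right
        refine ⟨h, ?_⟩
        have h3 := hsorted t s hts
        rw [hu t, hu s, h] at h3
        have hl : (u t).length = (u s).length := by
          have := hulen t
          have := hulen s
          omega
        exact altLtAux_flip _ _ _ hl (altLtAux_append _ _ _ _ hl h3)
    rcases lt_trichotomy (f s) (f t) with h1 | h1 | h1
    · exact h1
    · rw [h1] at key
      exact absurd key (altLtAux_asymm _ _ _ key)
    · exact absurd (hsorted _ _ h1) (altLtAux_asymm _ _ _ key)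
  intro i
  obtain ⟨t, rfl⟩ := hfb.2 i
  have hcount := count_core n L f hfb hlt t
  have hpre : (x :: p) <+: rows (f t) ↔ (L t = x ∧ b ≤ t ∧ t ≤ e) := by
    rw [hf, List.cons_prefix_cons, ← hbe, hu t, List.prefix_concat_iff]
    have hne : p ≠ u t ++ [L t] := by
      intro h
      have h1 := congrArg List.length h
      have h2 := hulen t
      simp at h1
      omega
    simp only [hne, false_or]
    exact and_congr_left fun _ => eq_comm
  rw [hpre]
  rcases lt_trichotomy (L t) x with hx | hx | hx
  · refine iff_of_false (fun h => hx.ne h.1) ?_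
    rintro ⟨h1, -⟩
    have hpos : 0 < (Finset.univ.filter fun s : Fin n => s ≤ t ∧ L s = L t).card :=
      Finset.card_pos.mpr ⟨t, by simp⟩
    have hd : (Finset.univ.filter fun s : Fin n => L s ≤ L t).card
        + (Finset.univ.filter fun s : Fin n => s ≤ e ∧ L s = x).card
        ≤ (Finset.univ.filter fun s : Fin n => L s ≤ x).card := by
      rw [← Finset.card_union_of_disjoint]
      · apply Finset.card_le_card
        intro s
        simp only [Finset.mem_union, Finset.mem_filter, Finset.mem_univ, true_and]
        rintro (h | h)
        · exact h.trans hx.le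
        · exact h.2.le
      · rw [Finset.disjoint_left]
        intro s
        simp only [Finset.mem_filter, Finset.mem_univ, true_and]
        intro h h'
        exact absurd (h'.2 ▸ h) (not_le.mpr hx)
    omega
  · subst hx
    have hA : t ≤ e ↔ (Finset.univ.filter fun s : Fin n => s ≤ t ∧ L s = L t).card
        ≤ (Finset.univ.filter fun s : Fin n => s ≤ e ∧ L s = L t).card := by
      constructor
      · intro h
        apply Finset.card_le_card
        intro s
        simp only [Finset.mem_filter, Finset.mem_univ, true_and]
        exact fun h' => ⟨h'.1.trans h, h'.2⟩
      · intro h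
        by_contra hc
        refine absurd h (not_le.mpr (Finset.card_lt_card ?_))
        rw [Finset.ssubset_iff_of_subset]
        · exact ⟨t, by simp, by simpa using hc⟩
        · intro s
          simp only [Finset.mem_filter, Finset.mem_univ, true_and]
          exact fun h' => ⟨h'.1.trans (not_le.mp hc).le, h'.2⟩
    have hB : b ≤ t ↔ (Finset.univ.filter fun s : Fin n => s < b ∧ L s = L t).card
        < (Finset.univ.filter fun s : Fin n => s ≤ t ∧ L s = L t).card := by
      constructor
      · intro h
        apply Finset.card_lt_card
        rw [Finset.ssubset_iff_of_subset]
        · exact ⟨t, by simp, by simpa using h⟩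
        · intro s
          simp only [Finset.mem_filter, Finset.mem_univ, true_and]
          exact fun h' => ⟨h'.1.le.trans h, h'.2⟩
      · intro h
        by_contra hc
        refine absurd h (not_lt.mpr (Finset.card_le_card ?_))
        intro s
        simp only [Finset.mem_filter, Finset.mem_univ, true_and]
        exact fun h' => ⟨h'.1.trans_lt (not_le.mp hc), h'.2⟩
    rw [hA, hB]
    simp only [true_and]
    omega
  · refine iff_of_false (fun h => hx.ne' h.1) ?_
    rintro ⟨-, h2⟩
    have hd : (Finset.univ.filter fun s : Fin n => L s ≤ x).card
        + (Finset.univ.filter fun s : Fin n => s ≤ t ∧ L s = L t).card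
        ≤ (Finset.univ.filter fun s : Fin n => L s ≤ L t).card := by
      rw [← Finset.card_union_of_disjoint]
      · apply Finset.card_le_card
        intro s
        simp only [Finset.mem_union, Finset.mem_filter, Finset.mem_univ, true_and]
        rintro (h | h)
        · exact h.trans hx.le
        · exact h.2.le
      · rw [Finset.disjoint_left]
        intro s
        simp only [Finset.mem_filter, Finset.mem_univ, true_and]
        intro h h'
        exact absurd (h'.2 ▸ h) (not_le.mpr hx)
    omega

end Paper
end

section
/- Let Σ = {a, b, c} be a three-letter alphabet with standard order a < b < c, and let K = (Id, π) where π is a linear order on Σ. If there exist symbols x, y, z, t ∈ Σ with x < y and z < t in the standard order, such that x is smaller than y in π and z is larger than t in π, then BWT_K is not rank-invertible. -/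
namespace Paper

variable {α : Type*}

/-- Rank-invertibility of the generalized BWT determined by the sequence of
per-position strict orders `σ`: there is a function `f` computing `LF i` from
the Parikh vector of the last column `L`, the symbol `L i`, and the number of
occurrences of `L i` in `L[0..i]`. -/
def RankInvertible [LinearOrder α] (σ : ℕ → α → α → Prop) : Prop :=
  ∃ f : (α → ℕ) → α → ℕ → ℕ,
    ∀ (n : ℕ) (w : List α), w.length = n → Primitive w →
      ∀ (rows : Fin n → List α) (L : Fin n → α) (LF : Fin n → Fin n),
        (∀ j : Fin n, ∃ i : Fin n, rows i = w.rotate j.val) →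
        (∀ i j : Fin n, i < j → KLt σ 0 (rows i) (rows j)) →
        (∀ i, (rows i).getLast? = some (L i)) →
        (∀ i, rows (LF i) = (rows i).rotate ((rows i).length - 1)) →
        ∀ i : Fin n, (LF i : ℕ) =
          f (fun c => (List.ofFn L).count c) (L i)
            (((List.ofFn L).take (i.val + 1)).count (L i))

/-- The data of a sorted rotation matrix of a word of length four. -/
structure Cert (σ : ℕ → Fin 3 → Fin 3 → Prop) (w : List (Fin 3)) (p : Fin 4 → ℕ)
    (L : Fin 4 → Fin 3) (LF : Fin 4 → Fin 4) : Prop where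
  len : w.length = 4
  prim : ∀ i < 4, ∀ j < 4, w.rotate i = w.rotate j → i = j
  surj : ∀ j : Fin 4, ∃ i : Fin 4, w.rotate (p i) = w.rotate j.val
  sorted : ∀ i j : Fin 4, i < j → KLt σ 0 (w.rotate (p i)) (w.rotate (p j))
  last : ∀ i, (w.rotate (p i)).getLast? = some (L i)
  lf : ∀ i, w.rotate (p (LF i)) = (w.rotate (p i)).rotate ((w.rotate (p i)).length - 1)

theorem Cert.apply {σ : ℕ → Fin 3 → Fin 3 → Prop} {f : (Fin 3 → ℕ) → Fin 3 → ℕ → ℕ}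
    {w : List (Fin 3)} {p : Fin 4 → ℕ} {L : Fin 4 → Fin 3} {LF : Fin 4 → Fin 4}
    (hf : ∀ (n : ℕ) (w : List (Fin 3)), w.length = n → Primitive w →
      ∀ (rows : Fin n → List (Fin 3)) (L : Fin n → Fin 3) (LF : Fin n → Fin n),
        (∀ j : Fin n, ∃ i : Fin n, rows i = w.rotate j.val) →
        (∀ i j : Fin n, i < j → KLt σ 0 (rows i) (rows j)) →
        (∀ i, (rows i).getLast? = some (L i)) →
        (∀ i, rows (LF i) = (rows i).rotate ((rows i).length - 1)) →
        ∀ i : Fin n, (LF i : ℕ) =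
          f (fun c => (List.ofFn L).count c) (L i)
            (((List.ofFn L).take (i.val + 1)).count (L i)))
    (h : Cert σ w p L LF) (i : Fin 4) :
    (LF i : ℕ) = f (fun c => (List.ofFn L).count c) (L i)
            (((List.ofFn L).take (i.val + 1)).count (L i)) :=
  hf 4 w h.len
    (fun i j hi hj => h.prim i (h.len ▸ hi) j (h.len ▸ hj)) (fun i => w.rotate (p i)) L LF
    h.surj h.sorted h.last h.lf i

theorem not_inv {σ : ℕ → Fin 3 → Fin 3 → Prop}
    {w w' : List (Fin 3)} {p p' : Fin 4 → ℕ} {L L' : Fin 4 → Fin 3} {LF LF' : Fin 4 → Fin 4}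
    (h : Cert σ w p L LF) (h' : Cert σ w' p' L' LF') (i i' : Fin 4)
    (hP : ∀ c, (List.ofFn L).count c = (List.ofFn L').count c)
    (hL : L i = L' i')
    (hr : ((List.ofFn L).take (i.val + 1)).count (L i) =
      ((List.ofFn L').take (i'.val + 1)).count (L' i'))
    (hne : LF i ≠ LF' i') : ¬ RankInvertible σ := by
  rintro ⟨f, hf⟩
  have e := h.apply hf i
  have e' := h'.apply hf i'
  rw [hr, hL, funext hP, ← e'] at e
  exact hne (Fin.ext e)

theorem case_021 (π : Fin 3 → Fin 3 → Prop) (h01 : π 0 1) (h02 : π 0 2) (h21 : π 2 1) :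
    ¬ RankInvertible (fun d => if d % 2 = 0 then (fun a b : Fin 3 => a < b) else π) := by
  refine not_inv (w := [0, 0, 1, 2]) (p := ![0, 1, 2, 3]) (L := ![2, 0, 0, 1]) (LF := ![3, 0, 1, 2])
    (w' := [0, 1, 0, 2]) (p' := ![2, 0, 1, 3]) (L' := ![1, 2, 0, 0]) (LF' := ![2, 3, 1, 0])
    ?_ ?_ 1 2 (by decide) (by decide) (by decide) (by decide)
  · refine ⟨by decide, by decide, by decide, ?_, by decide, by decide⟩
    intro i j hij
    fin_cases i <;> fin_cases j <;>
      simp_all [KLt, List.rotate]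
  · refine ⟨by decide, by decide, by decide, ?_, by decide, by decide⟩
    intro i j hij
    fin_cases i <;> fin_cases j <;>
      simp_all [KLt, List.rotate]

theorem case_102 (π : Fin 3 → Fin 3 → Prop) (h02 : π 0 2) (h10 : π 1 0) (h12 : π 1 2) :
    ¬ RankInvertible (fun d => if d % 2 = 0 then (fun a b : Fin 3 => a < b) else π) := by
  refine not_inv (w := [0, 0, 1, 2]) (p := ![1, 0, 2, 3]) (L := ![0, 2, 0, 1]) (LF := ![1, 3, 0, 2])
    (w' := [0, 0, 2, 1]) (p' := ![0, 1, 3, 2]) (L' := ![1, 0, 2, 0]) (LF' := ![2, 0, 3, 1])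
    ?_ ?_ 0 1 (by decide) (by decide) (by decide) (by decide)
  · refine ⟨by decide, by decide, by decide, ?_, by decide, by decide⟩
    intro i j hij
    fin_cases i <;> fin_cases j <;>
      simp_all [KLt, List.rotate]
  · refine ⟨by decide, by decide, by decide, ?_, by decide, by decide⟩
    intro i j hij
    fin_cases i <;> fin_cases j <;>
      simp_all [KLt, List.rotate]

theorem case_120 (π : Fin 3 → Fin 3 → Prop) (h01 : π 0 1) (h20 : π 2 0) (h21 : π 2 1) :
    ¬ RankInvertible (fun d => if d % 2 = 0 then (fun a b : Fin 3 => a < b) else π) := by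
  refine not_inv (w := [0, 0, 1, 2]) (p := ![0, 1, 2, 3]) (L := ![2, 0, 0, 1]) (LF := ![3, 0, 1, 2])
    (w' := [0, 0, 2, 1]) (p' := ![1, 0, 3, 2]) (L' := ![0, 1, 2, 0]) (LF' := ![1, 2, 3, 0])
    ?_ ?_ 1 0 (by decide) (by decide) (by decide) (by decide)
  · refine ⟨by decide, by decide, by decide, ?_, by decide, by decide⟩
    intro i j hij
    fin_cases i <;> fin_cases j <;>
      simp_all [KLt, List.rotate]
  · refine ⟨by decide, by decide, by decide, ?_, by decide, by decide⟩
    intro i j hij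
    fin_cases i <;> fin_cases j <;>
      simp_all [KLt, List.rotate]

theorem case_201 (π : Fin 3 → Fin 3 → Prop) (h10 : π 1 0) (h12 : π 1 2) (h20 : π 2 0) :
    ¬ RankInvertible (fun d => if d % 2 = 0 then (fun a b : Fin 3 => a < b) else π) := by
  refine not_inv (w := [0, 0, 1, 2]) (p := ![1, 0, 2, 3]) (L := ![0, 2, 0, 1]) (LF := ![1, 3, 0, 2])
    (w' := [0, 1, 0, 2]) (p' := ![0, 2, 1, 3]) (L' := ![2, 1, 0, 0]) (LF' := ![3, 2, 0, 1])
    ?_ ?_ 0 2 (by decide) (by decide) (by decide) (by decide)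
  · refine ⟨by decide, by decide, by decide, ?_, by decide, by decide⟩
    intro i j hij
    fin_cases i <;> fin_cases j <;>
      simp_all [KLt, List.rotate]
  · refine ⟨by decide, by decide, by decide, ?_, by decide, by decide⟩
    intro i j hij
    fin_cases i <;> fin_cases j <;>
      simp_all [KLt, List.rotate]

/-- on the three-letter alphabet `Fin 3` with standard order, let
`K = (Id, π)` with `π` a linear (strict total) order. If there are symbols
`x < y` and `z < t` (standard order) with `x` smaller than `y` in `π` and
`z` larger than `t` in `π`, then `BWT_K` is not rank-invertible. -/
theorem bwtK_two_orders_not_rank_invertible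
    (π : Fin 3 → Fin 3 → Prop) (hπ : IsStrictTotalOrder (Fin 3) π)
    (x y z t : Fin 3) (hxy : x < y) (hzt : z < t)
    (hπxy : π x y) (hπtz : π t z) :
    ¬ RankInvertible (fun d => if d % 2 = 0 then (fun a b : Fin 3 => a < b) else π) := by
  have irr : ∀ a, ¬ π a a := hπ.irrefl
  have tr : ∀ a b c, π a b → π b c → π a c := hπ.trans
  have tot : ∀ a b, π a b ∨ a = b ∨ π b a := fun a b => by
    by_cases h1 : π a b
    · exact Or.inl h1
    · by_cases h2 : π b a
      · exact Or.inr (Or.inr h2)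
      · exact Or.inr (Or.inl (hπ.trichotomous a b h1 h2))
  have as : ∀ a b, π a b → π b a → False := fun a b h h' => irr a (tr a b a h h')
  rcases (by simpa using tot 0 1 : π 0 1 ∨ π 1 0) with h1 | h1 <;>
  rcases (by simpa using tot 0 2 : π 0 2 ∨ π 2 0) with h2 | h2 <;>
  rcases (by simpa using tot 1 2 : π 1 2 ∨ π 2 1) with h3 | h3
  · exfalso
    fin_cases z <;> fin_cases t <;> simp at hzt <;>
      first | exact as _ _ h1 hπtz | exact as _ _ h2 hπtz | exact as _ _ h3 hπtz
  · apply case_021 <;> assumption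
  · exact (as _ _ h2 (tr _ _ _ h1 h3)).elim
  · apply case_120 <;> assumption
  · apply case_102 <;> assumption
  · exact (as _ _ h1 (tr _ _ _ h2 h3)).elim
  · apply case_201 <;> assumption
  · exfalso
    fin_cases x <;> fin_cases y <;> simp at hxy <;>
      first | exact as _ _ h1 hπxy | exact as _ _ h2 hπxy | exact as _ _ h3 hπxy

end Paper
end

section
/- Let Σ be a finite alphabet with |Σ| ≥ 3 and let K = (Id, π_1, π_2, …, π_{k−1}) with k ≥ 2 be a tuple of linear orders on Σ. If π_1 ≠ Id and π_1 ≠ Rev, then BWT_K is not rank-invertible. -/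
namespace Paper

variable {α : Type*}

/-- The defining property of a function witnessing rank-invertibility. -/
def FSpec [LinearOrder α] (σ : ℕ → α → α → Prop) (f : (α → ℕ) → α → ℕ → ℕ) : Prop :=
    ∀ (n : ℕ) (w : List α), w.length = n → Primitive w →
      ∀ (rows : Fin n → List α) (L : Fin n → α) (LF : Fin n → Fin n),
        (∀ j : Fin n, ∃ i : Fin n, rows i = w.rotate j.val) →
        (∀ i j : Fin n, i < j → KLt σ 0 (rows i) (rows j)) →
        (∀ i, (rows i).getLast? = some (L i)) →
        (∀ i, rows (LF i) = (rows i).rotate ((rows i).length - 1)) →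
        ∀ i : Fin n, (LF i : ℕ) =
          f (fun c => (List.ofFn L).count c) (L i)
            (((List.ofFn L).take (i.val + 1)).count (L i))

theorem word_aabc_up [LinearOrder α] (σ : ℕ → α → α → Prop)
    (h0 : ∀ x y, x < y → σ 0 x y) (f : (α → ℕ) → α → ℕ → ℕ)
    (hf : FSpec σ f) (a b c : α) (hab : a < b) (hbc : b < c) (hR : σ 1 a b) :
    f (fun d => [a, a, b, c].count d) a 1 = 0 := by
  have hac := hab.trans hbc
  have n1 := hab.ne
  have n2 := hbc.ne
  have n3 := hac.ne
  have n4 := hab.ne'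
  have n5 := hbc.ne'
  have n6 := hac.ne'
  have e1 := h0 _ _ hab
  have e2 := h0 _ _ hbc
  have e3 := h0 _ _ hac
  have key := hf 4 [a, a, b, c] rfl ?_ ![[a, a, b, c], [a, b, c, a], [b, c, a, a], [c, a, a, b]] ![c, a, a, b] ![3, 0, 1, 2] ?_ ?_ ?_ ?_ 1
  · have hP : (fun d => (List.ofFn ![c, a, a, b]).count d) = fun d => [a, a, b, c].count d := by
      funext d
      simp only [List.ofFn_succ, List.ofFn_zero, List.count_cons, List.count_nil,
        Matrix.cons_val_zero, Matrix.cons_val_succ]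
      omega
    rw [hP] at key
    generalize (fun d => [a, a, b, c].count d) = P at key ⊢
    simp [List.ofFn_succ, List.count_cons, n1, n2, n3, n4, n5, n6] at key
    exact key.symm
  · intro i j hi hj h
    simp only [List.length_cons, List.length_nil] at hi hj
    interval_cases i <;> interval_cases j <;> simp_all [List.rotate]
  · intro j
    fin_cases j
    · exact ⟨0, by simp [List.rotate]⟩
    · exact ⟨1, by simp [List.rotate]⟩
    · exact ⟨2, by simp [List.rotate]⟩
    · exact ⟨3, by simp [List.rotate]⟩
  · intro i j hij
    fin_cases i <;> fin_cases j <;> first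
      | (exact absurd hij (by decide))
      | (simp [KLt, *])
  · intro i
    fin_cases i <;> simp
  · intro i
    fin_cases i <;> simp [List.rotate]

theorem word_aabc_down [LinearOrder α] (σ : ℕ → α → α → Prop)
    (h0 : ∀ x y, x < y → σ 0 x y) (f : (α → ℕ) → α → ℕ → ℕ)
    (hf : FSpec σ f) (a b c : α) (hab : a < b) (hbc : b < c) (hR : σ 1 b a) :
    f (fun d => [a, a, b, c].count d) a 1 = 1 := by
  have hac := hab.trans hbc
  have n1 := hab.ne
  have n2 := hbc.ne
  have n3 := hac.ne
  have n4 := hab.ne'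
  have n5 := hbc.ne'
  have n6 := hac.ne'
  have e1 := h0 _ _ hab
  have e2 := h0 _ _ hbc
  have e3 := h0 _ _ hac
  have key := hf 4 [a, a, b, c] rfl ?_ ![[a, b, c, a], [a, a, b, c], [b, c, a, a], [c, a, a, b]] ![a, c, a, b] ![1, 3, 0, 2] ?_ ?_ ?_ ?_ 0
  · have hP : (fun d => (List.ofFn ![a, c, a, b]).count d) = fun d => [a, a, b, c].count d := by
      funext d
      simp only [List.ofFn_succ, List.ofFn_zero, List.count_cons, List.count_nil,
        Matrix.cons_val_zero, Matrix.cons_val_succ]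
      omega
    rw [hP] at key
    generalize (fun d => [a, a, b, c].count d) = P at key ⊢
    simp [List.ofFn_succ, List.count_cons, n1, n2, n3, n4, n5, n6] at key
    exact key.symm
  · intro i j hi hj h
    simp only [List.length_cons, List.length_nil] at hi hj
    interval_cases i <;> interval_cases j <;> simp_all [List.rotate]
  · intro j
    fin_cases j
    · exact ⟨1, by simp [List.rotate]⟩
    · exact ⟨0, by simp [List.rotate]⟩
    · exact ⟨2, by simp [List.rotate]⟩
    · exact ⟨3, by simp [List.rotate]⟩
  · intro i j hij
    fin_cases i <;> fin_cases j <;> first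
      | (exact absurd hij (by decide))
      | (simp [KLt, *])
  · intro i
    fin_cases i <;> simp
  · intro i
    fin_cases i <;> simp [List.rotate]

theorem word_aacb_up [LinearOrder α] (σ : ℕ → α → α → Prop)
    (h0 : ∀ x y, x < y → σ 0 x y) (f : (α → ℕ) → α → ℕ → ℕ)
    (hf : FSpec σ f) (a b c : α) (hab : a < b) (hbc : b < c) (hR : σ 1 a c) :
    f (fun d => [a, a, b, c].count d) a 1 = 0 := by
  have hac := hab.trans hbc
  have n1 := hab.ne
  have n2 := hbc.ne
  have n3 := hac.ne
  have n4 := hab.ne'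
  have n5 := hbc.ne'
  have n6 := hac.ne'
  have e1 := h0 _ _ hab
  have e2 := h0 _ _ hbc
  have e3 := h0 _ _ hac
  have key := hf 4 [a, a, c, b] rfl ?_ ![[a, a, c, b], [a, c, b, a], [b, a, a, c], [c, b, a, a]] ![b, a, c, a] ![2, 0, 3, 1] ?_ ?_ ?_ ?_ 1
  · have hP : (fun d => (List.ofFn ![b, a, c, a]).count d) = fun d => [a, a, b, c].count d := by
      funext d
      simp only [List.ofFn_succ, List.ofFn_zero, List.count_cons, List.count_nil,
        Matrix.cons_val_zero, Matrix.cons_val_succ]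
      omega
    rw [hP] at key
    generalize (fun d => [a, a, b, c].count d) = P at key ⊢
    simp [List.ofFn_succ, List.count_cons, n1, n2, n3, n4, n5, n6] at key
    exact key.symm
  · intro i j hi hj h
    simp only [List.length_cons, List.length_nil] at hi hj
    interval_cases i <;> interval_cases j <;> simp_all [List.rotate]
  · intro j
    fin_cases j
    · exact ⟨0, by simp [List.rotate]⟩
    · exact ⟨1, by simp [List.rotate]⟩
    · exact ⟨3, by simp [List.rotate]⟩
    · exact ⟨2, by simp [List.rotate]⟩
  · intro i j hij
    fin_cases i <;> fin_cases j <;> first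
      | (exact absurd hij (by decide))
      | (simp [KLt, *])
  · intro i
    fin_cases i <;> simp
  · intro i
    fin_cases i <;> simp [List.rotate]

theorem word_aacb_down [LinearOrder α] (σ : ℕ → α → α → Prop)
    (h0 : ∀ x y, x < y → σ 0 x y) (f : (α → ℕ) → α → ℕ → ℕ)
    (hf : FSpec σ f) (a b c : α) (hab : a < b) (hbc : b < c) (hR : σ 1 c a) :
    f (fun d => [a, a, b, c].count d) a 1 = 1 := by
  have hac := hab.trans hbc
  have n1 := hab.ne
  have n2 := hbc.ne
  have n3 := hac.ne
  have n4 := hab.ne'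
  have n5 := hbc.ne'
  have n6 := hac.ne'
  have e1 := h0 _ _ hab
  have e2 := h0 _ _ hbc
  have e3 := h0 _ _ hac
  have key := hf 4 [a, a, c, b] rfl ?_ ![[a, c, b, a], [a, a, c, b], [b, a, a, c], [c, b, a, a]] ![a, b, c, a] ![1, 2, 3, 0] ?_ ?_ ?_ ?_ 0
  · have hP : (fun d => (List.ofFn ![a, b, c, a]).count d) = fun d => [a, a, b, c].count d := by
      funext d
      simp only [List.ofFn_succ, List.ofFn_zero, List.count_cons, List.count_nil,
        Matrix.cons_val_zero, Matrix.cons_val_succ]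
      omega
    rw [hP] at key
    generalize (fun d => [a, a, b, c].count d) = P at key ⊢
    simp [List.ofFn_succ, List.count_cons, n1, n2, n3, n4, n5, n6] at key
    exact key.symm
  · intro i j hi hj h
    simp only [List.length_cons, List.length_nil] at hi hj
    interval_cases i <;> interval_cases j <;> simp_all [List.rotate]
  · intro j
    fin_cases j
    · exact ⟨1, by simp [List.rotate]⟩
    · exact ⟨0, by simp [List.rotate]⟩
    · exact ⟨3, by simp [List.rotate]⟩
    · exact ⟨2, by simp [List.rotate]⟩
  · intro i j hij
    fin_cases i <;> fin_cases j <;> first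
      | (exact absurd hij (by decide))
      | (simp [KLt, *])
  · intro i
    fin_cases i <;> simp
  · intro i
    fin_cases i <;> simp [List.rotate]

theorem word_abac_up [LinearOrder α] (σ : ℕ → α → α → Prop)
    (h0 : ∀ x y, x < y → σ 0 x y) (f : (α → ℕ) → α → ℕ → ℕ)
    (hf : FSpec σ f) (a b c : α) (hab : a < b) (hbc : b < c) (hR : σ 1 b c) :
    f (fun d => [a, a, b, c].count d) a 1 = 0 := by
  have hac := hab.trans hbc
  have n1 := hab.ne
  have n2 := hbc.ne
  have n3 := hac.ne
  have n4 := hab.ne'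
  have n5 := hbc.ne'
  have n6 := hac.ne'
  have e1 := h0 _ _ hab
  have e2 := h0 _ _ hbc
  have e3 := h0 _ _ hac
  have key := hf 4 [a, b, a, c] rfl ?_ ![[a, b, a, c], [a, c, a, b], [b, a, c, a], [c, a, b, a]] ![c, b, a, a] ![3, 2, 0, 1] ?_ ?_ ?_ ?_ 2
  · have hP : (fun d => (List.ofFn ![c, b, a, a]).count d) = fun d => [a, a, b, c].count d := by
      funext d
      simp only [List.ofFn_succ, List.ofFn_zero, List.count_cons, List.count_nil,
        Matrix.cons_val_zero, Matrix.cons_val_succ]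
      omega
    rw [hP] at key
    generalize (fun d => [a, a, b, c].count d) = P at key ⊢
    simp [List.ofFn_succ, List.count_cons, n1, n2, n3, n4, n5, n6] at key
    exact key.symm
  · intro i j hi hj h
    simp only [List.length_cons, List.length_nil] at hi hj
    interval_cases i <;> interval_cases j <;> simp_all [List.rotate]
  · intro j
    fin_cases j
    · exact ⟨0, by simp [List.rotate]⟩
    · exact ⟨2, by simp [List.rotate]⟩
    · exact ⟨1, by simp [List.rotate]⟩
    · exact ⟨3, by simp [List.rotate]⟩
  · intro i j hij
    fin_cases i <;> fin_cases j <;> first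
      | (exact absurd hij (by decide))
      | (simp [KLt, *])
  · intro i
    fin_cases i <;> simp
  · intro i
    fin_cases i <;> simp [List.rotate]

theorem word_abac_down [LinearOrder α] (σ : ℕ → α → α → Prop)
    (h0 : ∀ x y, x < y → σ 0 x y) (f : (α → ℕ) → α → ℕ → ℕ)
    (hf : FSpec σ f) (a b c : α) (hab : a < b) (hbc : b < c) (hR : σ 1 c b) :
    f (fun d => [a, a, b, c].count d) a 1 = 1 := by
  have hac := hab.trans hbc
  have n1 := hab.ne
  have n2 := hbc.ne
  have n3 := hac.ne
  have n4 := hab.ne'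
  have n5 := hbc.ne'
  have n6 := hac.ne'
  have e1 := h0 _ _ hab
  have e2 := h0 _ _ hbc
  have e3 := h0 _ _ hac
  have key := hf 4 [a, b, a, c] rfl ?_ ![[a, c, a, b], [a, b, a, c], [b, a, c, a], [c, a, b, a]] ![b, c, a, a] ![2, 3, 1, 0] ?_ ?_ ?_ ?_ 2
  · have hP : (fun d => (List.ofFn ![b, c, a, a]).count d) = fun d => [a, a, b, c].count d := by
      funext d
      simp only [List.ofFn_succ, List.ofFn_zero, List.count_cons, List.count_nil,
        Matrix.cons_val_zero, Matrix.cons_val_succ]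
      omega
    rw [hP] at key
    generalize (fun d => [a, a, b, c].count d) = P at key ⊢
    simp [List.ofFn_succ, List.count_cons, n1, n2, n3, n4, n5, n6] at key
    exact key.symm
  · intro i j hi hj h
    simp only [List.length_cons, List.length_nil] at hi hj
    interval_cases i <;> interval_cases j <;> simp_all [List.rotate]
  · intro j
    fin_cases j
    · exact ⟨1, by simp [List.rotate]⟩
    · exact ⟨2, by simp [List.rotate]⟩
    · exact ⟨0, by simp [List.rotate]⟩
    · exact ⟨3, by simp [List.rotate]⟩
  · intro i j hij
    fin_cases i <;> fin_cases j <;> first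
      | (exact absurd hij (by decide))
      | (simp [KLt, *])
  · intro i
    fin_cases i <;> simp
  · intro i
    fin_cases i <;> simp [List.rotate]

theorem triple_agree [LinearOrder α] (σ : ℕ → α → α → Prop)
    (h0 : ∀ x y, x < y → σ 0 x y) (h1 : ∀ x y, x ≠ y → σ 1 x y ∨ σ 1 y x)
    (f : (α → ℕ) → α → ℕ → ℕ)
    (hf : FSpec σ f) (a b c : α) (hab : a < b) (hbc : b < c) :
    (σ 1 a b ∧ σ 1 a c ∧ σ 1 b c) ∨ (σ 1 b a ∧ σ 1 c a ∧ σ 1 c b) := by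
  have u1 := word_aabc_up σ h0 f hf a b c hab hbc
  have u2 := word_aacb_up σ h0 f hf a b c hab hbc
  have u3 := word_abac_up σ h0 f hf a b c hab hbc
  have d1 := word_aabc_down σ h0 f hf a b c hab hbc
  have d2 := word_aacb_down σ h0 f hf a b c hab hbc
  have d3 := word_abac_down σ h0 f hf a b c hab hbc
  rcases h1 a b hab.ne with p | p <;> rcases h1 a c (hab.trans hbc).ne with q | q <;>
    rcases h1 b c hbc.ne with r | r <;> simp_all

theorem pairs_agree [LinearOrder α] (R : α → α → Prop) (hR : IsStrictTotalOrder α R)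
    (H : ∀ a b c, a < b → b < c → (R a b ∧ R a c ∧ R b c) ∨ (R b a ∧ R c a ∧ R c b))
    (x y u v : α) (hxy : x < y) (huv : u < v) (h1 : R y x) (h2 : R u v) : False := by
  have asy : ∀ p q, R p q → ¬ R q p := fun p q h h' => asymm_of R h h'
  have T : ∀ p q r, p ≠ q → p ≠ r → q ≠ r → ((R p q ↔ p < q) ↔ (R p r ↔ p < r)) := by
    intro p q r hpq hpr hqr
    rcases lt_or_gt_of_ne hpq with g1 | g1 <;> rcases lt_or_gt_of_ne hpr with g2 | g2 <;>
      rcases lt_or_gt_of_ne hqr with g3 | g3 <;> grind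
  have S : ∀ p q, p ≠ q → ((R p q ↔ p < q) ↔ (R q p ↔ q < p)) := by
    intro p q hpq
    have := hR.toTrichotomous
    have := trichotomous_of R p q
    rcases lt_or_gt_of_ne hpq with g1 | g1 <;> grind
  have o1 : ¬ (R x y ↔ x < y) := by grind
  have o2 : (R u v ↔ u < v) := by grind
  have := hxy.ne
  have := huv.ne
  obtain ⟨O, hO⟩ : ∃ O : α → α → Prop, ∀ p q, O p q ↔ (R p q ↔ p < q) := ⟨_, fun _ _ => Iff.rfl⟩
  simp only [← hO] at T S o1 o2
  clear H hO asy h1 h2 hxy huv hR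
  by_cases xu : x = u
  · subst xu
    by_cases yv : y = v
    · subst yv; exact o1 o2
    · exact o1 ((T x y v (by assumption) (by assumption) yv).2 o2)
  · have s1 : O x u := by
      by_cases xv : x = v
      · subst xv; exact (S _ _ xu).2 o2
      · exact (S _ _ xu).2 ((T u x v (Ne.symm xu) (by assumption) xv).2 o2)
    by_cases yu : y = u
    · subst yu; exact o1 s1
    · exact o1 ((T x y u (by assumption) xu yu).2 s1)

/-- for a finite alphabet with at least three symbols and
`K = (Id, π 1, …, π (k-1))` with `k ≥ 2`, if `π 1` is neither the standard
order nor its reverse then `BWT_K` is not rank-invertible. -/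
theorem bwtK_second_order_not_id_rev_not_rank_invertible [LinearOrder α] [Fintype α]
    (hcard : 3 ≤ Fintype.card α)
    (k : ℕ) (hk : 2 ≤ k) (π : Fin k → α → α → Prop)
    (horder : ∀ t, IsStrictTotalOrder α (π t))
    (h0 : π ⟨0, by omega⟩ = fun a b : α => a < b)
    (h1lt : π ⟨1, by omega⟩ ≠ fun a b : α => a < b)
    (h1gt : π ⟨1, by omega⟩ ≠ fun a b : α => b < a) :
    ¬ RankInvertible (fun d => π ⟨d % k, Nat.mod_lt d (by omega)⟩) := by
  rintro ⟨f, hf⟩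
  set σ : ℕ → α → α → Prop := fun d => π ⟨d % k, Nat.mod_lt d (by omega)⟩ with hσ
  have hf' : FSpec σ f := hf
  have e0 : σ 0 = fun a b : α => a < b := by
    rw [← h0]; simp [hσ]
  have e1 : σ 1 = π ⟨1, by omega⟩ := by
    have : 1 % k = 1 := Nat.mod_eq_of_lt (by omega)
    simp [hσ, this]
  have so : IsStrictTotalOrder α (σ 1) := by rw [e1]; exact horder _
  rw [← e1] at h1lt h1gt
  have tri : ∀ x y, x ≠ y → σ 1 x y ∨ σ 1 y x := by
    intro x y hxy
    have := trichotomous_of (σ 1) x y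
    tauto
  have asy : ∀ p q, σ 1 p q → ¬ σ 1 q p := fun p q h h' => asymm_of (σ 1) h h'
  have H := triple_agree σ (by intro x y h; rw [e0]; exact h) tri f hf'
  have A : ∃ x y, x < y ∧ σ 1 y x := by
    by_contra hcon
    push Not at hcon
    apply h1lt
    funext x y
    apply propext
    rcases lt_trichotomy x y with g | g | g <;> grind
  have B : ∃ x y, x < y ∧ σ 1 x y := by
    by_contra hcon
    push Not at hcon
    apply h1gt
    funext x y
    apply propext
    rcases lt_trichotomy x y with g | g | g <;> grind
  obtain ⟨x, y, hxy, h1⟩ := A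
  obtain ⟨u, v, huv, h2⟩ := B
  exact pairs_agree (σ 1) so H x y u v hxy huv h1 h2

end Paper
end

section
/- Let Σ be a finite alphabet with |Σ| ≥ 2 and let K = (π_0, π_1, …, π_{k−1}) be a tuple of linear orders on Σ with π_0 = Id. If there exists an index i with 0 ≤ i ≤ k−3 such that π_i = Id, π_{i+1} = Id and π_{i+2} ≠ Id, then BWT_K is not rank-invertible. -/
namespace Paper

variable {α : Type*}

theorem KLt_irrefl (σ : ℕ → α → α → Prop) (hσ : ∀ d, IsStrictTotalOrder α (σ d)) :
    ∀ (x : List α) (d : ℕ), ¬ KLt σ d x x := by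
  intro x
  induction x with
  | nil => intro d h; exact h
  | cons a x ih =>
    intro d h
    have := hσ d
    rcases h with h | ⟨_, h⟩
    · exact irrefl_of (σ d) a h
    · exact ih _ h

theorem KLt_trans (σ : ℕ → α → α → Prop) (hσ : ∀ d, IsStrictTotalOrder α (σ d)) :
    ∀ (x y z : List α) (d : ℕ), KLt σ d x y → KLt σ d y z → KLt σ d x z := by
  intro x
  induction x with
  | nil => intro y z d h; exact h.elim
  | cons a x ih =>
    intro y z d h1 h2
    have := hσ d
    cases y with
    | nil => exact h1.elim
    | cons b y =>
      cases z with
      | nil => exact h2.elim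
      | cons c z =>
        rcases h1 with h1 | ⟨rfl, h1⟩
        · rcases h2 with h2 | ⟨rfl, h2⟩
          · exact Or.inl (trans_of (σ d) h1 h2)
          · exact Or.inl h1
        · rcases h2 with h2 | ⟨rfl, h2⟩
          · exact Or.inl h2
          · exact Or.inr ⟨rfl, ih _ _ _ h1 h2⟩

theorem KLt_total (σ : ℕ → α → α → Prop) (hσ : ∀ d, IsStrictTotalOrder α (σ d)) :
    ∀ (x y : List α) (d : ℕ), x.length = y.length → KLt σ d x y ∨ x = y ∨ KLt σ d y x := by
  intro x
  induction x with
  | nil =>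
    intro y d h
    cases y with
    | nil => simp
    | cons b y => simp at h
  | cons a x ih =>
    intro y d h
    have := hσ d
    cases y with
    | nil => simp at h
    | cons b y =>
      rcases trichotomous_of (σ d) a b with h1 | rfl | h1
      · exact Or.inl (Or.inl h1)
      · rcases ih y (d + 1) (by simpa using h) with h2 | rfl | h2
        · exact Or.inl (Or.inr ⟨rfl, h2⟩)
        · simp
        · exact Or.inr (Or.inr (Or.inr ⟨rfl, h2⟩))
      · exact Or.inr (Or.inr (Or.inl h1))

theorem KLt_append (σ : ℕ → α → α → Prop) (x y : List α) :
    ∀ (l : List α) (d : ℕ), KLt σ (d + l.length) x y → KLt σ d (l ++ x) (l ++ y) := by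
  intro l
  induction l with
  | nil => intro d h; exact h
  | cons a l ih =>
    intro d h
    refine Or.inr ⟨rfl, ih _ ?_⟩
    have e : d + 1 + l.length = d + (a :: l).length := by simp; omega
    rw [e]; exact h

theorem exists_sorting {β : Type*} [Fintype β] (r : β → β → Prop) (hr : IsStrictTotalOrder β r)
    (n : ℕ) (hn : Fintype.card β = n) :
    ∃ e : Fin n ≃ β, ∀ i j, i < j → r (e i) (e j) := by
  classical
  letI : LinearOrder β := linearOrderOfSTO r
  refine ⟨(monoEquivOfFin β hn).toEquiv, fun i j h => ?_⟩
  exact (monoEquivOfFin β hn).strictMono h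

/-- The word `b a^p b a^q`. -/
def W (a b : α) (p q : ℕ) : List α := b :: (List.replicate p a ++ b :: List.replicate q a)

theorem W_length (a b : α) (p q : ℕ) : (W a b p q).length = p + q + 2 := by
  simp [W]; omega

theorem W_count [DecidableEq α] (a b : α) (p q p' q' : ℕ) (h : p + q = p' + q') (c : α) :
    (W a b p q).count c = (W a b p' q').count c := by
  simp only [W, List.count_cons, List.count_append, List.count_replicate]
  split_ifs <;> omega

theorem W_rotate_swap (a b : α) (p q : ℕ) : (W a b p q).rotate (p + 1) = W a b q p := by
  have h := List.rotate_append_length_eq (b :: List.replicate p a) (b :: List.replicate q a)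
  simpa [W] using h

theorem W_rotate (a b : α) (p q j : ℕ) (hj : j < p + q + 2) :
    j = 0 ∨ j = p + 1 ∨ ∃ t, (W a b p q).rotate j = a :: t := by
  by_cases h0 : j = 0
  · exact Or.inl h0
  by_cases h1 : j = p + 1
  · exact Or.inr (Or.inl h1)
  refine Or.inr (Or.inr ?_)
  by_cases h2 : j < p + 1
  · obtain ⟨m, rfl⟩ : ∃ m, j = m + 1 := ⟨j - 1, by omega⟩
    obtain ⟨s, rfl⟩ : ∃ s, p = m + (s + 1) := ⟨p - m - 1, by omega⟩
    have h := List.rotate_append_length_eq (b :: List.replicate m a)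
      (List.replicate (s + 1) a ++ b :: List.replicate q a)
    refine ⟨List.replicate s a ++ b :: List.replicate q a ++ b :: List.replicate m a, ?_⟩
    simpa [W, List.replicate_add, List.replicate_succ] using h
  · obtain ⟨m, rfl⟩ : ∃ m, j = p + 2 + m := ⟨j - p - 2, by omega⟩
    obtain ⟨s, rfl⟩ : ∃ s, q = m + (s + 1) := ⟨q - m - 1, by omega⟩
    have h := List.rotate_append_length_eq
      (b :: (List.replicate p a ++ b :: List.replicate m a)) (List.replicate (s + 1) a)
    have e : (b :: (List.replicate p a ++ b :: List.replicate m a)).length = p + 2 + m := by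
      simp; omega
    rw [e] at h
    refine ⟨List.replicate s a ++ b :: (List.replicate p a ++ b :: List.replicate m a), ?_⟩
    simpa [W, List.replicate_add, List.replicate_succ] using h

theorem W_ne (a b : α) (hab : a ≠ b) (p q : ℕ) (hpq : p < q) : W a b p q ≠ W a b q p := by
  intro h
  have h2 := congrArg (fun l => l[p + 1]?) h
  simp [W, List.getElem?_append, hpq] at h2
  exact hab h2.symm

theorem W_primitive (a b : α) (hab : a ≠ b) (p q : ℕ) (hpq : p < q) : Primitive (W a b p q) := by
  have key : ∀ i j, i < j → j < p + q + 2 → (W a b p q).rotate i ≠ (W a b p q).rotate j := by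
    intro i j hij hj h
    obtain ⟨d, rfl⟩ : ∃ d, j = d + i := ⟨j - i, by omega⟩
    rw [← List.rotate_rotate] at h
    have h' := List.rotate_injective i h
    rcases W_rotate a b p q d (by omega) with h1 | h1 | ⟨t, h1⟩
    · omega
    · subst h1
      rw [W_rotate_swap] at h'
      exact W_ne a b hab p q hpq h'
    · rw [h1] at h'
      simp only [W, List.cons.injEq] at h'
      exact hab h'.1.symm
  intro i j hi hj h
  rw [W_length] at hi hj
  rcases lt_trichotomy i j with h1 | h1 | h1
  · exact (key i j h1 hj h).elim
  · exact h1
  · exact (key j i h1 hi h.symm).elim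

theorem rotate_last_inv (l : List α) : (l.rotate (l.length - 1)).rotate 1 = l := by
  cases l with
  | nil => simp
  | cons a l =>
    rw [List.rotate_rotate]
    have : (a :: l).length - 1 + 1 = (a :: l).length := by simp
    rw [this, List.rotate_length]

theorem rotate_last_head (l : List α) (c : α) (h : l.getLast? = some c) :
    ∃ t, l.rotate (l.length - 1) = c :: t := by
  obtain ⟨t, rfl⟩ := List.getLast?_eq_some_iff.1 h
  refine ⟨t, ?_⟩
  have := List.rotate_append_length_eq t [c]
  simpa using this

/-- Existence of the sorted matrix and basic facts. -/
theorem exists_rows [LinearOrder α] (σ : ℕ → α → α → Prop)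
    (hσ : ∀ d, IsStrictTotalOrder α (σ d)) (n : ℕ) (hn : 0 < n) (w : List α)
    (hw : w.length = n) (hp : Primitive w) :
    ∃ (rows : Fin n → List α) (L : Fin n → α) (LF : Fin n → Fin n),
      (∀ j : Fin n, ∃ i : Fin n, rows i = w.rotate j.val) ∧
      (∀ i : Fin n, ∃ j : Fin n, rows i = w.rotate j.val) ∧
      (∀ i j : Fin n, i < j → KLt σ 0 (rows i) (rows j)) ∧
      (∀ i, (rows i).getLast? = some (L i)) ∧
      (∀ i, rows (LF i) = (rows i).rotate ((rows i).length - 1)) ∧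
      (∀ c, (List.ofFn L).count c = w.count c) := by
  subst hw
  have hr : IsStrictTotalOrder (Fin w.length)
      (fun i j => KLt σ 0 (w.rotate i.val) (w.rotate j.val)) :=
    { irrefl := fun i => KLt_irrefl σ hσ _ _
      trans := fun i j l h1 h2 => KLt_trans σ hσ _ _ _ _ h1 h2
      trichotomous := fun i j h1 h2 => by
        rcases KLt_total σ hσ (w.rotate i.val) (w.rotate j.val) 0 (by simp) with h | h | h
        · exact (h1 h).elim
        · exact Fin.ext (hp _ _ i.2 j.2 h)
        · exact (h2 h).elim }
  obtain ⟨e, he⟩ := exists_sorting _ hr w.length (by simp)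
  haveI : NeZero w.length := ⟨hn.ne'⟩
  let s : Fin w.length := ⟨w.length - 1, by omega⟩
  let g : Equiv.Perm (Fin w.length) := e.trans (Equiv.addRight s)
  have hg : ∀ i, (g i).val = ((e i).val + (w.length - 1)) % w.length := by
    intro i
    simp [g, s, Fin.val_add]
  refine ⟨fun i => w.rotate (e i).val, fun i => w.get (g i), fun i => e.symm (g i),
    fun j => ⟨e.symm j, by simp⟩, fun i => ⟨e i, rfl⟩, he, ?_, ?_, ?_⟩
  · intro i
    rw [List.getLast?_eq_getElem?, List.length_rotate, List.getElem?_rotate (by omega)]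
    have := hg i
    rw [Nat.add_comm] at this
    rw [← this]
    simp
  · intro i
    simp only [Equiv.apply_symm_apply, List.length_rotate, List.rotate_rotate]
    rw [hg, List.rotate_mod]
  · intro c
    have h := Equiv.Perm.ofFn_comp_perm g w.get
    rw [List.ofFn_get] at h
    exact h.count_eq c

theorem count_first [DecidableEq α] (n : ℕ) (L : Fin n → α) (b : α) (i0 : Fin n) (hL0 : L i0 = b)
    (before : ∀ j, j < i0 → L j ≠ b) : ((List.ofFn L).take (i0.val + 1)).count b = 1 := by
  have hlen : i0.val < (List.ofFn L).length := by simp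
  rw [List.take_succ_eq_append_getElem hlen, List.count_append]
  have : (List.ofFn L)[i0.val] = b := by simpa using hL0
  rw [this]
  have hz : ((List.ofFn L).take i0.val).count b = 0 := by
    rw [List.count_eq_zero]
    intro hm
    obtain ⟨m, hm1, hm2⟩ := List.mem_iff_getElem.1 hm
    rw [List.length_take] at hm1
    have hm3 : m < i0.val := by omega
    rw [List.getElem_take, List.getElem_ofFn] at hm2
    exact before ⟨m, by omega⟩ hm3 hm2
  rw [hz]
  simp

theorem key [LinearOrder α] (σ : ℕ → α → α → Prop)
    (hσ : ∀ d, IsStrictTotalOrder α (σ d)) (h0 : ∀ x y, x < y → σ 0 x y) (a b : α) (hab : a < b)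
    (p q : ℕ) (hpq : p < q) (hs : σ p a b) (f : (α → ℕ) → α → ℕ → ℕ)
    (H : ∀ (n : ℕ) (w : List α), w.length = n → Primitive w →
      ∀ (rows : Fin n → List α) (L : Fin n → α) (LF : Fin n → Fin n),
        (∀ j : Fin n, ∃ i : Fin n, rows i = w.rotate j.val) →
        (∀ i j : Fin n, i < j → KLt σ 0 (rows i) (rows j)) →
        (∀ i, (rows i).getLast? = some (L i)) →
        (∀ i, rows (LF i) = (rows i).rotate ((rows i).length - 1)) →
        ∀ i : Fin n, (LF i : ℕ) =
          f (fun c => (List.ofFn L).count c) (L i)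
            (((List.ofFn L).take (i.val + 1)).count (L i))) :
    (σ (p + 1) a b → f (fun c => (W a b p q).count c) b 1 < p + q + 1) ∧
    (σ (p + 1) b a → f (fun c => (W a b p q).count c) b 1 = p + q + 1) := by
  have hp := W_primitive a b hab.ne p q hpq
  obtain ⟨rows, L, LF, h1, h1', h2, h3, h4, h5⟩ :=
    exists_rows σ hσ (p + q + 2) (by omega) (W a b p q) (W_length a b p q) hp
  have H' := H _ _ (W_length a b p q) hp rows L LF h1 h2 h3 h4
  simp only [h5] at H'
  have cls : ∀ i, rows i = W a b p q ∨ rows i = W a b q p ∨ ∃ t, rows i = a :: t := by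
    intro i
    obtain ⟨j, hj⟩ := h1' i
    rw [hj]
    rcases W_rotate a b p q j.val j.2 with h | h | h
    · left; rw [h]; simp
    · right; left; rw [h, W_rotate_swap]
    · right; right; exact h
  have asym : ∀ x y, KLt σ 0 x y → ¬ KLt σ 0 y x := fun x y hx hy =>
    KLt_irrefl σ hσ x 0 (KLt_trans σ hσ _ _ _ _ hx hy)
  have mono : ∀ i j, KLt σ 0 (rows i) (rows j) → i < j := by
    intro i j h
    rcases lt_trichotomy i j with h' | h' | h'
    · exact h'
    · subst h'; exact (KLt_irrefl σ hσ _ _ h).elim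
    · exact (asym _ _ h (h2 _ _ h')).elim
  have expq : List.replicate q a = List.replicate p a ++ a :: List.replicate (q - p - 1) a := by
    conv_lhs => rw [show q = p + ((q - p - 1) + 1) by omega]
    rw [List.replicate_add, List.replicate_succ]
  have Rp : (W a b p q).rotate 1 = List.replicate p a ++ b :: (List.replicate q a ++ [b]) := by
    simp [W]
  have Rq : (W a b q p).rotate 1 = List.replicate p a ++
      a :: (List.replicate (q - p - 1) a ++ b :: (List.replicate p a ++ [b])) := by
    simp [W, expq]
  obtain ⟨i0, hi0⟩ : ∃ i, rows i = (W a b q p).rotate 1 := by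
    obtain ⟨i, hi⟩ := h1 ⟨(p + 2) % (p + q + 2), Nat.mod_lt _ (by omega)⟩
    refine ⟨i, ?_⟩
    rw [hi, ← W_rotate_swap a b p q, List.rotate_rotate]
    have := List.rotate_mod (W a b p q) (p + 2)
    rw [W_length] at this
    exact this
  have hL0 : L i0 = b := by
    have := h3 i0
    rw [hi0, Rq] at this
    simp [List.getLast?_append, List.getLast?_cons] at this
    exact this.symm
  have hLF0 : rows (LF i0) = W a b q p := by
    have := rotate_last_inv (rows i0)
    rw [← h4] at this
    rw [hi0] at this
    exact List.rotate_injective 1 this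
  have lt21 : KLt σ 0 ((W a b q p).rotate 1) ((W a b p q).rotate 1) := by
    rw [Rp, Rq]
    apply KLt_append
    left
    simpa using hs
  have before : ∀ j, j < i0 → L j ≠ b := by
    intro j hj hb
    have hlt := h2 _ _ hj
    obtain ⟨t, ht⟩ := rotate_last_head _ _ (h3 j)
    have hinv := rotate_last_inv (rows j)
    rw [← h4, hb] at ht
    rw [← h4] at hinv
    rw [hi0, ← hinv] at hlt
    rcases cls (LF j) with h | h | ⟨t', h⟩
    · rw [h] at hlt; exact asym _ _ lt21 hlt
    · rw [h] at hlt; exact KLt_irrefl σ hσ _ _ hlt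
    · rw [h] at ht
      simp only [List.cons.injEq] at ht
      exact hab.ne ht.1
  have hcount : ((List.ofFn L).take (i0.val + 1)).count b = 1 := by
    exact count_first _ L b i0 hL0 before
  have hv := H' i0
  rw [hL0, hcount] at hv
  rw [← hv]
  have eqq : W a b q p = (b :: List.replicate p a) ++
      a :: (List.replicate (q - p - 1) a ++ b :: List.replicate p a) := by
    simp [W, expq]
  have eqp : W a b p q = (b :: List.replicate p a) ++ b :: List.replicate q a := by
    simp [W]
  constructor
  · intro hs1
    obtain ⟨i1, hi1⟩ := h1 ⟨0, by omega⟩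
    simp only [List.rotate_zero] at hi1
    have hlt : LF i0 < i1 := by
      apply mono
      rw [hLF0, hi1, eqp, eqq]
      apply KLt_append
      left
      simpa using hs1
    have := i1.2
    have h' : (LF i0).val < i1.val := hlt
    omega
  · intro hs1
    by_contra hne
    have hlt : LF i0 < (⟨p + q + 1, by omega⟩ : Fin (p + q + 2)) := by
      have := (LF i0).2
      rw [Fin.lt_def]
      simp only
      omega
    have hk := h2 _ _ hlt
    rw [hLF0] at hk
    rcases cls ⟨p + q + 1, by omega⟩ with h | h | ⟨t, h⟩
    · rw [h] at hk
      refine asym _ _ hk ?_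
      rw [eqp, eqq]
      apply KLt_append
      left
      simpa using hs1
    · rw [h] at hk
      exact KLt_irrefl σ hσ _ _ hk
    · rw [h] at hk
      refine asym _ _ hk ?_
      exact Or.inl (h0 _ _ hab)

/-- for a finite alphabet with at least two symbols and a tuple
`K = (π 0, …, π (k-1))` with `π 0 = Id`, if `K` contains a triplet
`(Id, Id, π)` with `π ≠ Id` (i.e. `π i = Id`, `π (i+1) = Id`,
`π (i+2) ≠ Id` for some `i ≤ k−3`), then `BWT_K` is not rank-invertible. -/
theorem bwtK_triplet_id_id_not_rank_invertible [LinearOrder α] [Fintype α]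
    (hcard : 2 ≤ Fintype.card α)
    (k : ℕ) (hk : 0 < k) (π : Fin k → α → α → Prop)
    (horder : ∀ t, IsStrictTotalOrder α (π t))
    (h0 : π ⟨0, hk⟩ = fun a b : α => a < b)
    (i : ℕ) (hik : i + 2 < k)
    (hi : π ⟨i, by omega⟩ = fun a b : α => a < b)
    (hi1 : π ⟨i + 1, by omega⟩ = fun a b : α => a < b)
    (hi2 : π ⟨i + 2, hik⟩ ≠ fun a b : α => a < b) :
    ¬ RankInvertible (fun d => π ⟨d % k, Nat.mod_lt d hk⟩) := by
  rintro ⟨f, H⟩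
  obtain ⟨a, b, hab, hba⟩ : ∃ a b : α, a < b ∧ π ⟨i + 2, hik⟩ b a := by
    by_contra hno
    push Not at hno
    apply hi2
    have := horder ⟨i + 2, hik⟩
    funext a b
    apply propext
    constructor
    · intro h
      rcases lt_trichotomy a b with h' | h' | h'
      · exact h'
      · subst h'; exact (irrefl_of (π ⟨i + 2, hik⟩) a h).elim
      · exact (hno b a h' h).elim
    · intro h
      rcases trichotomous_of (π ⟨i + 2, hik⟩) a b with h' | h' | h'
      · exact h'
      · exact (h.ne h').elim
      · exact (hno a b h h').elim
  set σ : ℕ → α → α → Prop := fun d => π ⟨d % k, Nat.mod_lt d hk⟩ with hσdef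
  have hσ : ∀ d, IsStrictTotalOrder α (σ d) := fun d => horder _
  have e : ∀ d (hd : d < k), σ d = π ⟨d, hd⟩ := by
    intro d hd
    simp only [hσdef, Nat.mod_eq_of_lt hd]
  have s0 : ∀ x y, x < y → σ 0 x y := by
    intro x y h
    rw [e 0 hk, h0]; exact h
  have si : σ i a b := by rw [e i (by omega), hi]; exact hab
  have si1 : σ (i + 1) a b := by rw [e (i + 1) (by omega), hi1]; exact hab
  have si2 : σ (i + 1 + 1) b a := by rw [e (i + 2) hik]; exact hba
  have A := (key σ hσ s0 a b hab i (i + 3) (by omega) si f H).1 si1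
  have B := (key σ hσ s0 a b hab (i + 1) (i + 2) (by omega) si1 f H).2 si2
  have C : (fun c => (W a b i (i + 3)).count c) = fun c => (W a b (i + 1) (i + 2)).count c :=
    funext fun c => W_count a b _ _ _ _ (by omega) c
  rw [C] at A
  omega

end Paper
end

section
/- Let Σ be a finite alphabet with |Σ| ≥ 2 and let K = (π_0, π_1, …, π_{k−1}) be a tuple of linear orders on Σ with π_0 = Id. If there exists an index i with 0 ≤ i ≤ k−3 such that π_i = Rev, π_{i+1} = Id and π_{i+2} ≠ Rev, then BWT_K is not rank-invertible. -/
namespace Paper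

variable {α : Type*}

theorem klt_append (σ : ℕ → α → α → Prop) (h : ∀ d a, ¬ σ d a a) (u x y : List α) (d : ℕ) :
    KLt σ d (u ++ x) (u ++ y) ↔ KLt σ (d + u.length) x y := by
  induction u generalizing d with
  | nil => simp
  | cons c u ih =>
    simp only [List.cons_append, KLt, h, false_or, true_and, ih, List.length_cons]
    rw [show d + 1 + u.length = d + (u.length + 1) by omega]

theorem klt_irrefl (σ : ℕ → α → α → Prop) (h : ∀ d a, ¬ σ d a a) (x : List α) (d : ℕ) :
    ¬ KLt σ d x x := by
  induction x generalizing d with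
  | nil => simp [KLt]
  | cons c u ih => simp [KLt, h, ih]

theorem klt_trans (σ : ℕ → α → α → Prop) (h : ∀ d, IsStrictTotalOrder α (σ d))
    (x y z : List α) (d : ℕ) (h1 : KLt σ d x y) (h2 : KLt σ d y z) : KLt σ d x z := by
  induction x generalizing d y z with
  | nil => simp [KLt] at h1
  | cons a x ih =>
    cases y with
    | nil => simp [KLt] at h1
    | cons b y =>
      cases z with
      | nil => simp [KLt] at h2
      | cons c z =>
        simp only [KLt] at *
        have := h d
        rcases h1 with h1 | ⟨rfl, h1⟩
        · rcases h2 with h2 | ⟨rfl, h2⟩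
          · exact Or.inl (_root_.trans h1 h2)
          · exact Or.inl h1
        · rcases h2 with h2 | ⟨rfl, h2⟩
          · exact Or.inl h2
          · exact Or.inr ⟨rfl, ih _ _ _ h1 h2⟩

theorem klt_tri (σ : ℕ → α → α → Prop) (h : ∀ d, IsStrictTotalOrder α (σ d))
    (x y : List α) (d : ℕ) (hl : x.length = y.length) :
    KLt σ d x y ∨ x = y ∨ KLt σ d y x := by
  induction x generalizing d y with
  | nil => cases y <;> simp_all
  | cons a x ih =>
    cases y with
    | nil => simp at hl
    | cons b y =>
      have := h d
      simp only [KLt]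
      rcases trichotomous_of (σ d) a b with h1 | rfl | h1
      · exact Or.inl (Or.inl h1)
      · rcases ih y (d + 1) (by simpa using hl) with h2 | rfl | h2
        · exact Or.inl (Or.inr ⟨rfl, h2⟩)
        · exact Or.inr (Or.inl rfl)
        · exact Or.inr (Or.inr (Or.inr ⟨rfl, h2⟩))
      · exact Or.inr (Or.inr (Or.inl h1))

theorem exists_enum {β : Type*} [Fintype β] (r : β → β → Prop) [IsStrictTotalOrder β r] (n : ℕ)
    (h : Fintype.card β = n) : ∃ e : Fin n ≃ β, ∀ i j, i < j → r (e i) (e j) := by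
  classical
  let _ := linearOrderOfSTO r
  let e := Fintype.orderIsoFinOfCardEq β h
  exact ⟨e.toEquiv, fun i j hij => e.strictMono hij⟩

/-- The word `a^p b a^q b`. -/
def WD (a b : α) (p q : ℕ) : List α :=
  List.replicate p a ++ b :: (List.replicate q a ++ [b])

theorem WD_length (a b : α) (p q : ℕ) : (WD a b p q).length = p + q + 1 + 1 := by
  simp [WD]; omega

theorem WD_get (a b : α) (hab : a ≠ b) (p q m : ℕ) (hm : m < (WD a b p q).length) :
    (WD a b p q)[m] = b ↔ m = p ∨ m = p + q + 1 := by
  have := WD_length a b p q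
  simp only [WD, List.getElem_append, List.getElem_cons, List.length_replicate,
    List.getElem_replicate]
  grind

theorem WD_prim (a b : α) (hab : a ≠ b) (p q : ℕ) (hpq : p < q) : Primitive (WD a b p q) := by
  have hl := WD_length a b p q
  have key : ∀ i j, i < j → j < (WD a b p q).length →
      (WD a b p q).rotate i = (WD a b p q).rotate j → False := by
    intro i j hij hj h
    rw [show j = (j - i) + i by omega, ← List.rotate_rotate, List.rotate_eq_rotate] at h
    obtain ⟨d, hd⟩ : ∃ d, d = j - i := ⟨_, rfl⟩
    rw [← hd] at h
    have hg : ∀ m (hm : m < p + q + 1 + 1), (m = p ∨ m = p + q + 1) →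
        ((m + d) % (p + q + 1 + 1) = p ∨ (m + d) % (p + q + 1 + 1) = p + q + 1) := by
      intro m hm hmb
      have hm' : m < (WD a b p q).length := by omega
      have h1 := (WD_get a b hab p q m hm').2 hmb
      have h2 : (WD a b p q)[m] = ((WD a b p q).rotate d)[m]'(by simpa using hm') := by
        simp only [← h]
      rw [List.getElem_rotate] at h2
      have h3 := (WD_get a b hab p q _ (Nat.mod_lt _ (by omega))).1 (h2.symm.trans h1)
      rwa [hl] at h3
    have h1 := hg (p + q + 1) (by omega) (Or.inr rfl)
    rw [show p + q + 1 + d = (d - 1) + (p + q + 1 + 1) by omega, Nat.add_mod_right,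
      Nat.mod_eq_of_lt (by omega)] at h1
    have hdp : d = p + 1 := by omega
    have h2 := hg p (by omega) (Or.inl rfl)
    rw [hdp, Nat.mod_eq_of_lt (by omega)] at h2
    omega
  intro i j hi hj h
  rcases lt_trichotomy i j with h1 | h1 | h1
  · exact (key i j h1 hj h).elim
  · exact h1
  · exact (key j i h1 hi h.symm).elim

theorem ranks [DecidableEq α] (l : List α) (b : α) (h2 : l.count b = 2) (i j : ℕ) (hij : i < j)
    (hj : j < l.length) (hib : l[i] = b) (hjb : l[j] = b) :
    (l.take (i + 1)).count b = 1 ∧ (l.take (j + 1)).count b = 2 := by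
  have h1 : (l.take (i + 1)).count b = (l.take i).count b + 1 := by
    rw [List.take_succ_eq_append_getElem (by omega), List.count_append, hib]; simp
  have h3 : (l.take (j + 1)).count b = (l.take j).count b + 1 := by
    rw [List.take_succ_eq_append_getElem (by omega), List.count_append, hjb]; simp
  have h4 : (l.take (i + 1)).count b ≤ (l.take j).count b :=
    (List.take_sublist_take_left (by omega)).count_le _
  have h5 : (l.take (j + 1)).count b ≤ l.count b := (List.take_sublist _ _).count_le _
  omega

theorem WD_rot_mid (a b : α) (p q : ℕ) :
    (WD a b p q).rotate (p + 1) = WD a b q p := by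
  have : WD a b p q = (List.replicate p a ++ [b]) ++ (List.replicate q a ++ [b]) := by simp [WD]
  rw [this]
  have h := List.rotate_append_length_eq (List.replicate p a ++ [b]) (List.replicate q a ++ [b])
  simp only [List.length_append, List.length_replicate, List.length_singleton] at h
  rw [h]; simp [WD]

theorem WD_rot_last (a b : α) (p q : ℕ) :
    (WD a b p q).rotate (p + q + 1) = b :: (List.replicate p a ++ b :: List.replicate q a) := by
  have : WD a b p q = (List.replicate p a ++ b :: List.replicate q a) ++ [b] := by simp [WD]
  rw [this]
  have h := List.rotate_append_length_eq (List.replicate p a ++ b :: List.replicate q a) [b]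
  rw [show (List.replicate p a ++ b :: List.replicate q a).length = p + q + 1 by simp; omega] at h
  rw [h]; simp

theorem key_lemma [LinearOrder α] (σ : ℕ → α → α → Prop) (h : ∀ d, IsStrictTotalOrder α (σ d))
    (f : (α → ℕ) → α → ℕ → ℕ)
    (hf : ∀ (n : ℕ) (w : List α), w.length = n → Primitive w →
      ∀ (rows : Fin n → List α) (L : Fin n → α) (LF : Fin n → Fin n),
        (∀ j : Fin n, ∃ i : Fin n, rows i = w.rotate j.val) →
        (∀ i j : Fin n, i < j → KLt σ 0 (rows i) (rows j)) →
        (∀ i, (rows i).getLast? = some (L i)) →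
        (∀ i, rows (LF i) = (rows i).rotate ((rows i).length - 1)) →
        ∀ i : Fin n, (LF i : ℕ) =
          f (fun c => (List.ofFn L).count c) (L i)
            (((List.ofFn L).take (i.val + 1)).count (L i)))
    (a b : α) (hab : a ≠ b) (p q : ℕ) (hpq : p < q) :
    f (fun c => (WD a b p q).count c) b 1 < f (fun c => (WD a b p q).count c) b 2 ↔
      (σ p a b ↔ σ (p + 1) a b) := by
  have hirr : ∀ d a, ¬ σ d a a := fun d a => (h d).irrefl a
  have hl := WD_length a b p q
  have hprim := WD_prim a b hab p q hpq
  have hget := WD_get a b hab p q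
  have hmid := WD_rot_mid a b p q
  have hlast := WD_rot_last a b p q
  have hw : WD a b p q = List.replicate p a ++ b :: (List.replicate q a ++ [b]) := rfl
  obtain ⟨w, hwd⟩ : ∃ w, w = WD a b p q := ⟨_, rfl⟩
  obtain ⟨n, hn⟩ : ∃ n, n = p + q + 1 := ⟨_, rfl⟩
  have hcount : w.count b = 2 := by
    rw [hwd, hw]; simp [List.count_replicate, hab]
  simp only [← hwd, ← hn] at hl hprim hget hmid hlast hw
  rw [← hwd]
  let r : Fin (n + 1) → Fin (n + 1) → Prop :=
    fun j j' => KLt σ 0 (w.rotate j.val) (w.rotate j'.val)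
  have hr : IsStrictTotalOrder (Fin (n + 1)) r :=
    { irrefl := fun j => klt_irrefl σ hirr _ _
      trans := fun x y z h1 h2 => klt_trans σ h _ _ _ _ h1 h2
      trichotomous := fun x y h1 h2 => by
        rcases klt_tri σ h (w.rotate x.val) (w.rotate y.val) 0 (by simp) with h3 | h3 | h3
        · exact (h1 h3).elim
        · exact Fin.ext (hprim _ _ (by omega) (by omega) h3)
        · exact (h2 h3).elim }
  obtain ⟨e, he⟩ := exists_enum r (n + 1) (by simp)
  have hlt : ∀ x y, r x y ↔ e.symm x < e.symm y := by
    intro x y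
    constructor
    · intro hxy
      rcases lt_trichotomy (e.symm x) (e.symm y) with h1 | h1 | h1
      · exact h1
      · rw [e.symm.injective h1] at hxy; exact (hr.irrefl _ hxy).elim
      · have := he _ _ h1
        simp only [Equiv.apply_symm_apply] at this
        exact (hr.irrefl _ (hr.trans _ _ _ hxy this)).elim
    · intro h1
      simpa using he _ _ h1
  let g : Fin (n + 1) → α := fun j => w[j.val]'(by omega)
  let L : Fin (n + 1) → α := g ∘ (e.trans (Equiv.subRight 1))
  let LF : Fin (n + 1) → Fin (n + 1) := fun i => e.symm (e i - 1)
  have hL : List.Perm (List.ofFn L) w := by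
    refine (Equiv.Perm.ofFn_comp_perm (e.trans (Equiv.subRight 1)) g).trans ?_
    rw [show List.ofFn g = w from ?_]
    apply List.ext_getElem
    · simp [hl]
    · intro m h1 h2; simp only [List.getElem_ofFn, g]
  have hPar : (fun c => (List.ofFn L).count c) = fun c => w.count c := by
    funext c; exact hL.count_eq c
  have hsub : ∀ j : Fin (n + 1), (j - 1).val = (j.val + n) % (n + 1) := by
    intro j
    rcases Nat.eq_zero_or_pos n with h0 | h0
    · omega
    · rw [Fin.sub_def]
      simp only [Fin.val_one']
      rw [Nat.mod_eq_of_lt (by omega : 1 < n + 1)]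
      congr 1; omega
  have main := hf (n + 1) w hl hprim (fun i => w.rotate (e i).val) L LF
    (fun j => ⟨e.symm j, by simp⟩) (fun i j hij => he i j hij)
    (by
      intro i
      rw [List.getLast?_eq_getElem?, List.length_rotate, hl]
      rw [List.getElem?_rotate (by omega)]
      simp only [L, g, Function.comp, Equiv.trans_apply, Equiv.subRight_apply, hsub, hl]
      rw [← List.getElem?_eq_getElem]
      congr 2; omega)
    (by
      intro i
      simp only [LF, Equiv.apply_symm_apply, hsub, List.length_rotate, List.rotate_rotate, hl]
      rw [← List.rotate_mod w ((e i).val + _), hl]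
      simp)
  rw [hPar] at main
  -- the two rows ending in b
  let x : Fin (n + 1) := ⟨0, by omega⟩
  let y : Fin (n + 1) := ⟨p + 1, by omega⟩
  have hx1 : (x - 1).val = n := by rw [hsub]; simp [x]
  have hy1 : (y - 1).val = p := by
    rw [hsub]
    simp only [y]
    rw [show p + 1 + n = p + (n + 1) by omega, Nat.add_mod_right, Nat.mod_eq_of_lt (by omega)]
  have hLx : L (e.symm x) = b := by
    simp only [L, g, Function.comp, Equiv.trans_apply, Equiv.subRight_apply,
      Equiv.apply_symm_apply]
    rw [hget _ (by omega)]; omega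
  have hLy : L (e.symm y) = b := by
    simp only [L, g, Function.comp, Equiv.trans_apply, Equiv.subRight_apply,
      Equiv.apply_symm_apply]
    rw [hget _ (by omega)]; omega
  have hcL : (List.ofFn L).count b = 2 := by rw [hL.count_eq, hcount]
  have mx := main (e.symm x)
  have my := main (e.symm y)
  rw [hLx] at mx
  rw [hLy] at my
  simp only [LF, Equiv.apply_symm_apply] at mx my
  obtain ⟨s, hs⟩ : ∃ s, q = p + (s + 1) := ⟨q - p - 1, by omega⟩
  have hrep : List.replicate q a = List.replicate p a ++ a :: List.replicate s a := by
    rw [hs, List.replicate_add, List.replicate_succ]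
  have hrxy : e.symm x < e.symm y ↔ σ p b a := by
    rw [← hlt]
    simp only [r, x, y, hmid, List.rotate_zero]
    simp only [hw, WD, hrep, List.append_assoc]
    rw [klt_append σ hirr]
    simp [KLt, hab.symm]
  have hryx : e.symm y < e.symm x ↔ σ p a b := by
    rw [← hlt]
    simp only [r, x, y, hmid, List.rotate_zero]
    simp only [hw, WD, hrep, List.append_assoc]
    rw [klt_append σ hirr]
    simp [KLt, hab]
  have hmid2 : w.rotate p = b :: (List.replicate q a ++ b :: List.replicate p a) := by
    have h1 : (w.rotate (p + 1)).rotate n = w.rotate p := by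
      rw [List.rotate_rotate, ← List.rotate_mod, hl,
        show p + 1 + n = p + (n + 1) by omega, Nat.add_mod_right, Nat.mod_eq_of_lt (by omega)]
    rw [← h1, hmid, ← WD_rot_last, hn]
    congr 1; omega
  have hLFyx : e.symm (y - 1) < e.symm (x - 1) ↔ σ (p + 1) a b := by
    rw [← hlt]
    simp only [r, hx1, hy1, hmid2, hlast]
    simp only [KLt, hirr, false_or, true_and]
    rw [hrep, List.append_assoc, klt_append σ hirr]
    simp [KLt, hab, Nat.add_comm]
  have hLFxy : e.symm (x - 1) < e.symm (y - 1) ↔ σ (p + 1) b a := by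
    rw [← hlt]
    simp only [r, hx1, hy1, hmid2, hlast]
    simp only [KLt, hirr, false_or, true_and]
    rw [hrep, List.append_assoc, klt_append σ hirr]
    simp [KLt, hab.symm, Nat.add_comm]
  have hasy : ∀ d, σ d a b ↔ ¬ σ d b a := by
    intro d
    have := h d
    rcases trichotomous_of (σ d) a b with h1 | h1 | h1
    · exact ⟨fun _ h2 => hirr _ _ (_root_.trans h1 h2), fun _ => h1⟩
    · exact (hab h1).elim
    · exact ⟨fun h2 => (hirr _ _ (_root_.trans h1 h2)).elim, fun h2 => (h2 h1).elim⟩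
  by_cases hp : σ p a b
  · have hlt' := hryx.2 hp
    have hrk := ranks (List.ofFn L) b hcL _ _ hlt' (by simp; omega) (by rw [List.getElem_ofFn]; exact hLy)
      (by rw [List.getElem_ofFn]; exact hLx)
    rw [hrk.2] at mx
    rw [hrk.1] at my
    rw [← mx, ← my, Fin.val_fin_lt, hLFyx]
    tauto
  · have hp' : σ p b a := by by_contra hc; exact hp ((hasy p).2 hc)
    have hlt' := hrxy.2 hp'
    have hrk := ranks (List.ofFn L) b hcL _ _ hlt' (by simp; omega) (by rw [List.getElem_ofFn]; exact hLx)
      (by rw [List.getElem_ofFn]; exact hLy)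
    rw [hrk.1] at mx
    rw [hrk.2] at my
    rw [← mx, ← my, Fin.val_fin_lt, hLFxy]
    have := hasy (p + 1)
    tauto

/-- for a finite alphabet with at least two symbols and a tuple
`K = (π 0, …, π (k-1))` with `π 0 = Id`, if `K` contains a triplet
`(Rev, Id, π)` with `π ≠ Rev` (i.e. `π i = Rev`, `π (i+1) = Id`,
`π (i+2) ≠ Rev` for some `i ≤ k−3`), then `BWT_K` is not rank-invertible. -/
theorem bwtK_triplet_rev_id_not_rank_invertible [LinearOrder α] [Fintype α]
    (hcard : 2 ≤ Fintype.card α)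
    (k : ℕ) (hk : 0 < k) (π : Fin k → α → α → Prop)
    (horder : ∀ t, IsStrictTotalOrder α (π t))
    (h0 : π ⟨0, hk⟩ = fun a b : α => a < b)
    (i : ℕ) (hik : i + 2 < k)
    (hi : π ⟨i, by omega⟩ = fun a b : α => b < a)
    (hi1 : π ⟨i + 1, by omega⟩ = fun a b : α => a < b)
    (hi2 : π ⟨i + 2, hik⟩ ≠ fun a b : α => b < a) :
    ¬ RankInvertible (fun d => π ⟨d % k, Nat.mod_lt d hk⟩) := by
  rintro ⟨f, hf⟩
  obtain ⟨a, b, hab, h2⟩ : ∃ a b : α, a < b ∧ π ⟨i + 2, hik⟩ a b := by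
    by_contra hc
    push Not at hc
    apply hi2
    have := horder ⟨i + 2, hik⟩
    funext u v
    apply propext
    constructor
    · intro huv
      rcases lt_trichotomy u v with h1 | rfl | h1
      · exact (hc _ _ h1 huv).elim
      · exact ((horder ⟨i + 2, hik⟩).irrefl _ huv).elim
      · exact h1
    · intro hvu
      rcases trichotomous_of (π ⟨i + 2, hik⟩) u v with h1 | h1 | h1
      · exact h1
      · exact (hvu.ne' h1).elim
      · exact (hc _ _ hvu h1).elim
  have k1 := key_lemma _ (fun d => horder _) f hf a b hab.ne i (i + 3) (by omega)
  have k2 := key_lemma _ (fun d => horder _) f hf a b hab.ne (i + 1) (i + 2) (by omega)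
  have hP : (fun c => (WD a b i (i + 3)).count c) =
      fun c => (WD a b (i + 1) (i + 2)).count c := by
    funext c
    simp only [WD, List.count_append, List.count_cons, List.count_replicate, List.count_nil]
    split_ifs <;> omega
  rw [hP, k2] at k1
  simp only [Nat.mod_eq_of_lt (show i < k by omega), Nat.mod_eq_of_lt (show i + 1 < k by omega),
    Nat.mod_eq_of_lt (show i + 1 + 1 < k by omega), hi, hi1] at k1
  have h3 : π ⟨i + 1 + 1, hik⟩ a b := h2
  simp [hab, hab.not_gt, h3] at k1

end Paper
end

section
/- A primitive word w over a linearly ordered alphabet is a Galois word if and only if w ≺_alt v for every nonempty proper suffix v of w, where ≺_alt is the alternating lexicographic order extended to words of different lengths. -/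
namespace Paper

variable {α : Type*}

/-- A primitive word `w` is a Galois word if `w ≼_alt vu` for every nontrivial
factorization `w = uv`. -/
def IsGalois [LinearOrder α] (w : List α) : Prop :=
  Primitive w ∧ ∀ u v : List α, w = u ++ v → u ≠ [] → v ≠ [] → AltLe w (v ++ u)
theorem aux_prefix [LinearOrder α] (p : List α) : ∀ (b : Bool) (x y : List α),
    altLtAux b (p ++ x) (p ++ y) ↔ altLtAux (if p.length % 2 = 0 then b else !b) x y := by
  induction p with
  | nil => intro b x y; simp
  | cons c p ih =>
    intro b x y
    have h1 : altLtAux b (c :: p ++ x) (c :: p ++ y) ↔ altLtAux (!b) (p ++ x) (p ++ y) := by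
      cases b <;> simp [altLtAux]
    rw [h1, ih]
    rcases Nat.mod_two_eq_zero_or_one p.length with h | h
    · have : (p.length + 1) % 2 = 1 := by omega
      simp [h, this]
    · have : (p.length + 1) % 2 = 0 := by omega
      simp [h, this]

theorem aux_append [LinearOrder α] (x : List α) : ∀ (b : Bool) (y s r : List α),
    x.length = y.length → x ≠ y →
    (altLtAux b (x ++ s) (y ++ r) ↔ altLtAux b x y) := by
  induction x with
  | nil =>
    intro b y s r h hne
    cases y with
    | nil => exact absurd rfl hne
    | cons d y => simp at h
  | cons c x ih =>
    intro b y s r h hne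
    cases y with
    | nil => simp at h
    | cons d y =>
      simp only [List.cons_append, altLtAux]
      by_cases hcd : c = d
      · subst hcd
        have hxy : x ≠ y := fun e => hne (by rw [e])
        rw [ih (!b) y s r (by simpa using h) hxy]
      · simp [hcd]

theorem aux_flip [LinearOrder α] (x : List α) : ∀ (b : Bool) (y : List α),
    x.length = y.length → (altLtAux (!b) x y ↔ altLtAux b y x) := by
  induction x with
  | nil =>
    intro b y h
    cases y with
    | nil => simp [altLtAux]
    | cons d y => simp at h
  | cons c x ih =>
    intro b y h
    cases y with
    | nil => simp at h
    | cons d y =>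
      simp only [altLtAux]
      rw [ih (!b) y (by simpa using h)]
      cases b <;> simp [eq_comm]

theorem aux_asymm [LinearOrder α] (x : List α) : ∀ (b : Bool) (y : List α),
    x.length = y.length → altLtAux b x y → altLtAux b y x → False := by
  induction x with
  | nil =>
    intro b y h
    cases y with
    | nil => simp [altLtAux]
    | cons d y => simp at h
  | cons c x ih =>
    intro b y h
    cases y with
    | nil => simp at h
    | cons d y =>
      simp only [altLtAux]
      rintro (h1 | ⟨rfl, h1⟩) (h2 | ⟨h3, h2⟩)
      · cases b <;> simp at h1 h2 <;> exact lt_asymm h1 h2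
      · subst h3; cases b <;> simp at h1
      · cases b <;> simp at h2
      · exact ih _ y (by simpa using h) h1 h2

theorem core_split [LinearOrder α] (u v : List α) (hu : u ≠ []) :
    (AltLt (u ++ v) (v ++ u) ↔ AltLt (u ++ v) v) ∨
    ∃ t, u ++ v = v ++ t ∧ t.length = u.length := by
  by_cases h : (u ++ v).take v.length = v
  · right
    refine ⟨(u ++ v).drop v.length, ?_, by simp⟩
    conv_lhs => rw [← List.take_append_drop v.length (u ++ v), h]
  · left
    have e : u ++ v = (u ++ v).take v.length ++ (u ++ v).drop v.length :=
      (List.take_append_drop _ _).symm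
    have hl : ((u ++ v).take v.length).length = v.length := by simp
    have h1 := aux_append _ true v ((u ++ v).drop v.length) u hl h
    have h2 := aux_append _ true v ((u ++ v).drop v.length) [] hl h
    rw [← e] at h1 h2
    rw [List.append_nil] at h2
    exact h1.trans h2.symm

theorem border_iff [LinearOrder α] (v t : List α) (ht : t ≠ []) :
    AltLt (v ++ t) v ↔ v.length % 2 = 1 := by
  have h := aux_prefix v true t []
  rw [List.append_nil] at h
  unfold AltLt
  rw [h]
  cases t with
  | nil => exact absurd rfl ht
  | cons c t =>
    simp only [altLtAux]
    split_ifs with h0 <;> simp <;> omega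

theorem prim_ne (u v : List α) (hu : u ≠ []) (hv : v ≠ [])
    (hp : Primitive (u ++ v)) : u ++ v ≠ v ++ u := by
  intro h
  have hu' := List.length_pos_iff.2 hu
  have hv' := List.length_pos_iff.2 hv
  have := hp 0 u.length (by simp; omega) (by simp; omega)
    (by rw [List.rotate_append_length_eq, List.rotate_zero, h])
  omega

/-- a primitive word `w` is a Galois word iff `w ≺_alt v` for
every nonempty proper suffix `v` of `w` (with `≺_alt` the alternating
lexicographic order extended to words of different lengths). -/
theorem galois_iff_lt_proper_suffixes [LinearOrder α] (w : List α)
    (hprim : Primitive w) :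
    IsGalois w ↔ ∀ v : List α, v <:+ w → v ≠ [] → v ≠ w → AltLt w v := by
  constructor
  · rintro ⟨-, hg⟩ v ⟨u, rfl⟩ hv hne
    have hu : u ≠ [] := by rintro rfl; simp at hne
    have hpn := prim_ne u v hu hv hprim
    have hlt : AltLt (u ++ v) (v ++ u) := (hg u v rfl hu hv).resolve_left hpn
    rcases core_split u v hu with h | ⟨t, ht, hl⟩
    · exact h.1 hlt
    · have ht0 : t ≠ [] := by
        rintro rfl; exact hu (List.length_eq_zero_iff.1 (by simpa using hl.symm))
      have htu : t ≠ u := by rintro rfl; exact hpn ht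
      have h2 : AltLt (u ++ v) (t ++ v) := by
        refine (hg v t ht hv ht0).resolve_left ?_
        intro e; exact htu (List.append_cancel_right e).symm
      have h3 : altLtAux true u t := (aux_append u true t v v hl.symm htu.symm).1 h2
      rw [ht] at hlt ⊢
      rw [border_iff v t ht0]
      by_contra hodd
      have hev : v.length % 2 = 0 := by omega
      have h4 := (aux_prefix v true t u).1 hlt
      rw [if_pos hev] at h4
      exact aux_asymm u true t hl.symm h3 h4
  · intro hs
    refine ⟨hprim, ?_⟩
    rintro u v rfl hu hv
    have hsv := hs v ⟨u, rfl⟩ hv (by intro e; exact hu (by simpa using e))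
    rcases core_split u v hu with h | ⟨t, ht, hl⟩
    · exact Or.inr (h.2 hsv)
    · have ht0 : t ≠ [] := by
        rintro rfl; exact hu (List.length_eq_zero_iff.1 (by simpa using hl.symm))
      by_cases htu : t = u
      · left; rw [ht, htu]
      · right
        have hst := hs t ⟨v, ht.symm⟩ ht0 (by
          intro e; rw [ht] at e; exact hv (by simpa using e))
        have h3 := aux_append u true t v [] hl.symm (Ne.symm htu)
        rw [List.append_nil] at h3
        have h4 := h3.1 hst
        rw [ht] at hsv ⊢
        have hodd := (border_iff v t ht0).1 hsv
        refine (aux_prefix v true t u).2 ?_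
        rw [if_neg (by omega)]
        exact (aux_flip t true u hl).2 h4

end Paper
end
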